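/- Suppose σ > 4/N, and σ < ∞ if N ≤ 4, σ < 4/(N-4) if N ≥ 5. Then: (i) if N ≥ 5 and 4/N < σ < 1, one has Ẽ_min(m) < -m for every m > 0; (ii) if σ > 4/N and σ ≥ 1, there exists m₀ > 0 such that Ẽ_min(m) = -m for every m ∈ (0, m₀]. -/

import Mathlib

open MeasureTheory Filter Topology

noncomputable section

abbrev Esp (N : ℕ) := EuclideanSpace ℝ (Fin N)

/-- Smooth compactly supported test functions. -/
def TestFun {N : ℕ} (φ : Esp N → ℂ) : Prop :=
  ContDiff ℝ (⊤ : ℕ∞) φ ∧ HasCompactSupport φ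

/-- Partial derivative in the `i`-th coordinate direction. -/
def pderivC {N : ℕ} (i : Fin N) (φ : Esp N → ℂ) : Esp N → ℂ :=
  fun x => fderiv ℝ φ x (EuclideanSpace.single i (1 : ℝ))

/-- The Laplacian of a (smooth) function. -/
def lapC {N : ℕ} (φ : Esp N → ℂ) : Esp N → ℂ :=
  fun x => ∑ i, pderivC i (pderivC i φ) x

/-- `v` is the weak `i`-th partial derivative of `u`. -/
def IsWeakPDeriv {N : ℕ} (u : Esp N → ℂ) (i : Fin N) (v : Esp N → ℂ) : Prop :=
  ∀ φ : Esp N → ℂ, TestFun φ → ∫ x, u x * pderivC i φ x = - ∫ x, v x * φ x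

/-- `v` is the weak Laplacian of `u`. -/
def IsWeakLap {N : ℕ} (u v : Esp N → ℂ) : Prop :=
  ∀ φ : Esp N → ℂ, TestFun φ → ∫ x, u x * lapC φ x = ∫ x, v x * φ x

/-- An element of the Sobolev space `H²(ℝ^N, ℂ)`: an `L²` function together with its
weak partial derivatives and its weak Laplacian, all in `L²`. -/
structure H2 (N : ℕ) where
  u : Esp N → ℂ
  grad : Fin N → Esp N → ℂ
  lapl : Esp N → ℂ
  u_mem : MemLp u 2 (volume : Measure (Esp N))
  grad_mem : ∀ i, MemLp (grad i) 2 (volume : Measure (Esp N))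
  lapl_mem : MemLp lapl 2 (volume : Measure (Esp N))
  grad_spec : ∀ i, IsWeakPDeriv u i (grad i)
  lapl_spec : IsWeakLap u lapl

namespace H2

variable {N : ℕ}

/-- `∫ |u|²`. -/
def massSq (U : H2 N) : ℝ := ∫ x, ‖U.u x‖ ^ 2

/-- `∫ |∇u|²`. -/
def gradSq (U : H2 N) : ℝ := ∑ i, ∫ x, ‖U.grad i x‖ ^ 2

/-- `∫ |Δu|²`. -/
def lapSq (U : H2 N) : ℝ := ∫ x, ‖U.lapl x‖ ^ 2

/-- `∫ |u|^{2σ+2}`. -/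
def pPow (σ : ℝ) (U : H2 N) : ℝ := ∫ x, ‖U.u x‖ ^ (2 * σ + 2)

/-- The energy `E(u) = ∫|Δu|² - 2∫|∇u|² - (1/(σ+1))∫|u|^{2σ+2}`. -/
def energy (σ : ℝ) (U : H2 N) : ℝ :=
  U.lapSq - 2 * U.gradSq - (1 / (σ + 1)) * U.pPow σ

/-- The square of the `H²` norm. -/
def h2NormSq (U : H2 N) : ℝ := U.massSq + U.gradSq + U.lapSq

/-- `u` does not vanish almost everywhere. -/
def Nontriv (U : H2 N) : Prop := ¬ (U.u =ᵐ[(volume : Measure (Esp N))] 0)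

end H2

/-- `E_min(m) = inf {E(u) : u ∈ H², ∫|u|² = m}`, with values in `EReal`. -/
def EminE (N : ℕ) (σ m : ℝ) : EReal :=
  ⨅ (U : H2 N) (_ : U.massSq = m), ((U.energy σ : ℝ) : EReal)

/-- The `L^p` norm (as a real number) of a function on `ℝ^N`. -/
def rLp {N : ℕ} (p : ℝ) (f : Esp N → ℂ) : ℝ :=
  (eLpNorm f (ENNReal.ofReal p) (volume : Measure (Esp N))).toReal

/-- The best constant `B(N,σ)` in the Gagliardo–Nirenberg–Sobolev inequality
`‖u‖_{L^{2σ+2}}^{2σ+2} ≤ B ‖Δu‖_{L²}^{Nσ/2} ‖u‖_{L²}^{2+2σ-Nσ/2}`. -/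
def GNconst (N : ℕ) (σ : ℝ) : ℝ :=
  sSup {r : ℝ | ∃ U : H2 N, U.Nontriv ∧
    r = U.pPow σ /
      (rLp 2 U.lapl ^ ((N : ℝ) * σ / 2) * rLp 2 U.u ^ (2 + 2 * σ - (N : ℝ) * σ / 2))}

/-- `k* = (σ+1)^{1/σ} B(N,σ)^{-1/σ}`. -/
def kstar (N : ℕ) (σ : ℝ) : ℝ := (σ + 1) ^ (1 / σ) * GNconst N σ ^ (-(1 / σ))

/-- Strong `H²` convergence of `v k (· + xs k)` to `U`. -/
def H2TendstoTrans {N : ℕ} (v : ℕ → H2 N) (xs : ℕ → Esp N) (U : H2 N) : Prop :=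
  Tendsto (fun k => eLpNorm (fun x => (v k).u (x + xs k) - U.u x) 2
      (volume : Measure (Esp N))) atTop (nhds 0) ∧
  (∀ i, Tendsto (fun k => eLpNorm (fun x => (v k).grad i (x + xs k) - U.grad i x) 2
      (volume : Measure (Esp N))) atTop (nhds 0)) ∧
  Tendsto (fun k => eLpNorm (fun x => (v k).lapl (x + xs k) - U.lapl x) 2
      (volume : Measure (Esp N))) atTop (nhds 0)

/-- `u` is a weak (`H^{-2}`) solution of `Δ²u + 2Δu + (1+c)u - |u|^{2σ}u = 0`. -/
def SolvesSW {N : ℕ} (σ c : ℝ) (U : H2 N) : Prop :=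
  ∀ φ : Esp N → ℂ, TestFun φ →
    (∫ x, U.lapl x * lapC φ x) + 2 * (∫ x, U.lapl x * φ x) +
        ((1 + c : ℝ) : ℂ) * (∫ x, U.u x * φ x) -
        (∫ x, ((‖U.u x‖ ^ (2 * σ) : ℝ) : ℂ) * U.u x * φ x) = 0

/-- `T_c(u) = ∫|Δu|² - 2∫|∇u|² + (1+c)∫|u|²`. -/
def Tfun {N : ℕ} (c : ℝ) (U : H2 N) : ℝ := U.lapSq - 2 * U.gradSq + (1 + c) * U.massSq

/-- `t(c) = inf {T_c(u) : ∫|u|^{2σ+2} = 1}`. -/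
def tmin (N : ℕ) (σ c : ℝ) : ℝ := sInf {r : ℝ | ∃ U : H2 N, U.pPow σ = 1 ∧ r = Tfun c U}

/-- The action `S_c(u) = E(u) + (1+c)‖u‖_{L²}² = T_c(u) - (1/(σ+1))∫|u|^{2σ+2}`. -/
def action {N : ℕ} (σ c : ℝ) (U : H2 N) : ℝ := U.energy σ + (1 + c) * U.massSq

/-- `D(u) = ∫|Δu|² - (Nσ/(4(σ+1)))(Nσ/2 - 1) ∫|u|^{2σ+2}`. -/
def Dfun {N : ℕ} (σ : ℝ) (U : H2 N) : ℝ :=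
  U.lapSq - (N : ℝ) * σ / (4 * (σ + 1)) * ((N : ℝ) * σ / 2 - 1) * U.pPow σ

/-- `φ_u(t) = E(u_t)` where `u_t(x) = t^{N/4} u(t^{1/2} x)`, i.e.
`φ_u(t) = t² ∫|Δu|² - 2t ∫|∇u|² - (t^{Nσ/2}/(σ+1)) ∫|u|^{2σ+2}`. -/
def phiFun {N : ℕ} (σ : ℝ) (U : H2 N) (t : ℝ) : ℝ :=
  t ^ 2 * U.lapSq - 2 * t * U.gradSq - t ^ ((N : ℝ) * σ / 2) / (σ + 1) * U.pPow σ

/-- The inflection point `t_{u,infl}`, the unique zero of `φ''_u`. -/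
def tInfl {N : ℕ} (σ : ℝ) (U : H2 N) : ℝ :=
  (8 * (σ + 1) * U.lapSq / ((N : ℝ) * σ * ((N : ℝ) * σ - 2) * U.pPow σ)) ^
    (2 / ((N : ℝ) * σ - 4))

/-- The open set `O = {u ≠ 0 : D(u) > 0 and φ'_u(t_{u,infl}) > 0}`. -/
def memO {N : ℕ} (σ : ℝ) (U : H2 N) : Prop :=
  U.Nontriv ∧ 0 < Dfun σ U ∧ 0 < deriv (phiFun σ U) (tInfl σ U)

/-- `Ẽ_min(m) = inf {E(u) : u ∈ O, ‖u‖_{L²}² = m}`. -/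
def tildeE (N : ℕ) (σ m : ℝ) : ℝ :=
  sInf {r : ℝ | ∃ U : H2 N, memO σ U ∧ U.massSq = m ∧ r = U.energy σ}

/-- The mass threshold `μ₀`. -/
def mu0 (N : ℕ) (σ : ℝ) : ℝ :=
  GNconst N σ ^ (-(1 / σ)) *
    ((N : ℝ) * σ / (4 * (σ + 1)) * ((N : ℝ) * σ / 2 - 1)) ^ (-(1 / σ)) *
    (((N : ℝ) * σ - 2) / ((N : ℝ) * σ - 4)) ^ (2 / σ - (N : ℝ) / 2)

open Real (pi_pos)
open Metric (closedBall)
open scoped FourierTransform SchwartzMap ENNReal Real RealInnerProductSpace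

/-!
By Plancherel, `E(u) + ‖u‖² = ∫ (4π²|ξ|² - 1)² |û|² - p(u)` with `p(u) = ∫|u|^{2σ+2} / (σ+1)`, so
the comparison of `E` with `-‖u‖²` is decided near the sphere `4π²|ξ|² = 1`.

For the upper bounds, let `û ≥ 0` be spread over the shell `|4π²|ξ|² - 1| < ε` with mass `m`. The
quadratic part is at most `ε²m`, while `u` is of size `(mε)^{1/2}` on a fixed ball around the
origin, so `p(u)` is at least of order `ε^{σ+1}`. This beats `ε²` when `σ < 1`, and both terms
vanish as `ε → 0` in any case. As `p(u)` is then small compared with `∫|Δu|²`, `u` lies in `O`.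

For the lower bound with `σ ≥ 1`, let `M` be the mass plus `a⁻²` times the quadratic part. Then
`p(u) ≤ C a² M^{σ+1}` for bounded `a`: away from the sphere this is the subcritical Sobolev
inequality, and near it Cauchy-Schwarz with weight `1 / ((4π²|ξ|² - 1)² + a²)` bounds the sup norm
of `u`, and in dimension at least three, applied to the convolution `û ∗ û`, the norm of `u²` in
`L²`. If `E(u) < -m` then the quadratic part is below `p = p(u)`, and `a² = p / m` gives
`p ≤ C p m^σ`, which fails for small `m`.
-/

/-! ### Integrals of Cauchy kernels -/

section Radial

variable {E : Type*} [NormedAddCommGroup E] [NormedSpace ℝ E] [FiniteDimensional ℝ E]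
  [MeasurableSpace E] [BorelSpace E] (μ : Measure E) [μ.IsAddHaarMeasure]

lemma lintegral_fun_norm_addHaar [Nontrivial E] {f : ℝ → ℝ≥0∞} (hf : Measurable f) :
    ∫⁻ x, f ‖x‖ ∂μ = μ.toSphere Set.univ *
      ∫⁻ r in Set.Ioi (0 : ℝ), ENNReal.ofReal (r ^ (Module.finrank ℝ E - 1)) * f r := by
  calc
    ∫⁻ x, f ‖x‖ ∂μ = ∫⁻ x : ({0}ᶜ : Set E), f ‖x.1‖ ∂(μ.comap (↑)) := by
      rw [lintegral_subtype_comap (measurableSet_singleton _).compl (fun x : E ↦ f ‖x‖),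
        restrict_compl_singleton]
    _ = ∫⁻ x, f x.2 ∂μ.toSphere.prod (.volumeIoiPow (Module.finrank ℝ E - 1)) := by
      simpa using μ.measurePreserving_homeomorphUnitSphereProd.lintegral_comp_emb
        (Homeomorph.measurableEmbedding _) (f ∘ Subtype.val ∘ Prod.snd)
    _ = μ.toSphere Set.univ *
          ∫⁻ r : Set.Ioi (0 : ℝ), f r ∂.volumeIoiPow (Module.finrank ℝ E - 1) := by
      rw [lintegral_prod _ (by fun_prop)]
      simp [mul_comm]
    _ = _ := by
      rw [Measure.volumeIoiPow, lintegral_withDensity_eq_lintegral_mul _ (by fun_prop)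
        (by fun_prop)]
      simp only [Pi.mul_apply]
      rw [lintegral_subtype_comap measurableSet_Ioi
        (fun r : ℝ ↦ ENNReal.ofReal (r ^ (Module.finrank ℝ E - 1)) * f r)]

lemma setLIntegral_closedBall_fun_norm_le [Nontrivial E] {k : ℕ}
    (hk : k < Module.finrank ℝ E) {f : ℝ → ℝ≥0∞} (hf : Measurable f) :
    ∫⁻ x in closedBall 0 1, f ‖x‖ ∂μ ≤
      μ.toSphere Set.univ * ∫⁻ r in Set.Ioi (0 : ℝ), ENNReal.ofReal (r ^ k) * f r := by
  have hball (x : E) : (closedBall 0 1).indicator (fun x : E ↦ f ‖x‖) x =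
      (Set.Iic (1 : ℝ)).indicator f ‖x‖ := by
    classical simp [Set.indicator_apply]
  rw [← lintegral_indicator measurableSet_closedBall, lintegral_congr hball,
    lintegral_fun_norm_addHaar μ (hf.indicator measurableSet_Iic)]
  refine mul_le_mul_right ?_ _
  refine setLIntegral_mono' measurableSet_Ioi fun r (hr : 0 < r) ↦ ?_
  by_cases hr1 : r ≤ 1
  · rw [Set.indicator_of_mem (s := Set.Iic 1) hr1]
    gcongr ENNReal.ofReal ?_ * _
    exact pow_le_pow_of_le_one hr.le hr1 (by lia)
  · rw [Set.indicator_of_notMem (s := Set.Iic 1) hr1, mul_zero]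
    exact zero_le

end Radial

/-- The Cauchy kernel `s ↦ 1 / (s² + a²)` of width `a`. With `s` the value of the symbol
`4π²|ξ|² - 1`, it is the weight through which the energy controls a Fourier transform. -/
def cauchyKernel (a s : ℝ) : ℝ := (s ^ 2 + a ^ 2)⁻¹

namespace cauchyKernel

variable {a : ℝ}

lemma nonneg (a s : ℝ) : 0 ≤ cauchyKernel a s := by unfold cauchyKernel; positivity

@[fun_prop]
lemma measurable (a : ℝ) : Measurable (cauchyKernel a) := by unfold cauchyKernel; fun_prop

lemma le_of_abs_le {s t : ℝ} (ha : 0 < a) (h : |s| ≤ |t|) :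
    cauchyKernel a t ≤ cauchyKernel a s := by
  have := sq_le_sq.2 h
  unfold cauchyKernel
  gcongr

lemma mul_le (ha : 0 < a) (s t : ℝ) : cauchyKernel a s * cauchyKernel a t ≤
    cauchyKernel a ((t - s) / 2) * (cauchyKernel a s + cauchyKernel a t) := by
  have key : cauchyKernel a ((t - s) / 2) * (cauchyKernel a s + cauchyKernel a t) =
      ((s ^ 2 + a ^ 2) + (t ^ 2 + a ^ 2)) / (((t - s) / 2) ^ 2 + a ^ 2) *
        (cauchyKernel a s * cauchyKernel a t) := by
    unfold cauchyKernel
    field_simp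
    ring
  rw [key]
  refine le_mul_of_one_le_left (mul_nonneg (nonneg a s) (nonneg a t)) ?_
  rw [one_le_div (by positivity)]
  nlinarith [sq_nonneg (s + t), sq_nonneg s, sq_nonneg t, sq_nonneg a]

lemma lintegral_comp_affine (ha : 0 < a) {b : ℝ} (hb : b ≠ 0) (c : ℝ) :
    ∫⁻ x : ℝ, ENNReal.ofReal (cauchyKernel a (b * x + c)) = ENNReal.ofReal (π / (|b| * a)) := by
  have hscale (x : ℝ) :
      cauchyKernel a (b * x + c) = (a ^ 2)⁻¹ * (1 + ((x + c / b) * (b / a)) ^ 2)⁻¹ := by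
    unfold cauchyKernel
    rw [← mul_inv]
    congr 1
    field_simp
    ring
  have hab : b / a ≠ 0 := div_ne_zero hb ha.ne'
  have hint : Integrable fun x : ℝ ↦ cauchyKernel a (b * x + c) := by
    simp_rw [hscale]
    exact ((integrable_inv_one_add_sq.comp_mul_right' hab).comp_add_right (c / b)).const_mul _
  rw [← ofReal_integral_eq_lintegral_ofReal hint (.of_forall fun _ ↦ nonneg _ _)]
  simp_rw [hscale]
  rw [integral_const_mul,
    integral_add_right_eq_self (fun x : ℝ ↦ (1 + (x * (b / a)) ^ 2)⁻¹) (c / b),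
    Measure.integral_comp_mul_right (fun x : ℝ ↦ (1 + x ^ 2)⁻¹), integral_univ_inv_one_add_sq,
    smul_eq_mul, abs_inv, abs_div, abs_of_pos ha]
  congr 1
  field_simp

lemma hasDerivAt_arctan_quadratic (ha : 0 < a) {κ : ℝ} (hκ : 0 < κ) (c r : ℝ) :
    HasDerivAt (fun r ↦ (2 * κ * a)⁻¹ * Real.arctan ((κ * r ^ 2 + c) / a))
      (r * cauchyKernel a (κ * r ^ 2 + c)) r := by
  have hquad : HasDerivAt (fun r : ℝ ↦ (κ * r ^ 2 + c) / a) (κ * (2 * r) / a) r := by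
    simpa using (((hasDerivAt_pow 2 r).const_mul κ).add_const c).div_const a
  refine (hquad.arctan.const_mul (2 * κ * a)⁻¹).congr_deriv ?_
  unfold cauchyKernel
  have : 1 + ((κ * r ^ 2 + c) / a) ^ 2 = ((κ * r ^ 2 + c) ^ 2 + a ^ 2) / a ^ 2 := by
    field_simp
    ring
  rw [this]
  field_simp

lemma setLIntegral_Ioi_mul_quadratic_le (ha : 0 < a) {κ : ℝ} (hκ : 0 < κ) (c : ℝ) :
    ∫⁻ r in Set.Ioi (0 : ℝ), ENNReal.ofReal r * ENNReal.ofReal (cauchyKernel a (κ * r ^ 2 + c)) ≤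
      ENNReal.ofReal (π / (2 * κ * a)) := by
  have hderiv := hasDerivAt_arctan_quadratic ha hκ c
  have hnonneg (r : ℝ) (hr : r ∈ Set.Ioi (0 : ℝ)) : 0 ≤ r * cauchyKernel a (κ * r ^ 2 + c) :=
    mul_nonneg (le_of_lt hr) (nonneg _ _)
  have hlim : Tendsto (fun r ↦ (2 * κ * a)⁻¹ * Real.arctan ((κ * r ^ 2 + c) / a)) atTop
      (𝓝 ((2 * κ * a)⁻¹ * (π / 2))) := by
    refine Tendsto.const_mul _ ((Real.tendsto_arctan_atTop.mono_right nhdsWithin_le_nhds).comp ?_)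
    exact (tendsto_atTop_add_const_right _ c
      ((tendsto_pow_atTop two_ne_zero).const_mul_atTop hκ)).atTop_div_const ha
  have hint := integrableOn_Ioi_deriv_of_nonneg' (fun r _ ↦ hderiv r) hnonneg hlim
  have hval := integral_Ioi_of_hasDerivAt_of_nonneg' (fun r _ ↦ hderiv r) hnonneg hlim
  calc _ = ∫⁻ r in Set.Ioi (0 : ℝ), ENNReal.ofReal (r * cauchyKernel a (κ * r ^ 2 + c)) :=
        setLIntegral_congr_fun measurableSet_Ioi fun r hr ↦
          (ENNReal.ofReal_mul (le_of_lt hr)).symm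
    _ = ENNReal.ofReal (∫ r in Set.Ioi (0 : ℝ), r * cauchyKernel a (κ * r ^ 2 + c)) :=
        (ofReal_integral_eq_lintegral_ofReal hint
          ((ae_restrict_iff' measurableSet_Ioi).2 (.of_forall hnonneg))).symm
    _ ≤ _ := by
        refine ENNReal.ofReal_le_ofReal ?_
        rw [hval, ← mul_sub]
        have hlow := Real.neg_pi_div_two_lt_arctan ((κ * 0 ^ 2 + c) / a)
        rw [inv_mul_eq_div]
        gcongr
        linarith

end cauchyKernel

section Shell

variable {E : Type*} [NormedAddCommGroup E]

/-- The symbol `4π²|ξ|² - 1` of `-Δ - 1`, whose zero set is the sphere on which the quadratic part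
of `E(u) + ‖u‖²` degenerates. -/
def shellSymbol (ξ : E) : ℝ := 4 * π ^ 2 * ‖ξ‖ ^ 2 - 1

variable (E) in
/-- The shell `|4π²|ξ|² - 1| < 1/2` around the zero sphere of the symbol. -/
def unitShell : Set E := {ξ | |shellSymbol ξ| < 1 / 2}

@[fun_prop]
lemma continuous_shellSymbol : Continuous (shellSymbol (E := E)) := by
  unfold shellSymbol; fun_prop

@[fun_prop]
lemma measurable_shellSymbol [MeasurableSpace E] [OpensMeasurableSpace E] :
    Measurable (shellSymbol (E := E)) :=
  continuous_shellSymbol.measurable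

lemma measurableSet_unitShell [MeasurableSpace E] [OpensMeasurableSpace E] :
    MeasurableSet (unitShell E) :=
  measurableSet_lt continuous_shellSymbol.abs.measurable measurable_const

lemma unitShell_subset_closedBall : unitShell E ⊆ closedBall 0 1 := by
  intro ξ hξ
  have hlt : 4 * π ^ 2 * ‖ξ‖ ^ 2 - 1 < 1 / 2 := (abs_lt.1 hξ).2
  have hπ : 9 < π ^ 2 := by nlinarith [Real.pi_gt_three]
  rw [mem_closedBall_zero_iff]
  nlinarith [norm_nonneg ξ, sq_nonneg ‖ξ‖]

lemma half_lt_of_mem_unitShell {ξ : E} (hξ : ξ ∈ unitShell E) :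
    1 / 2 < 4 * π ^ 2 * ‖ξ‖ ^ 2 := by
  have hlt : -(1 / 2) < 4 * π ^ 2 * ‖ξ‖ ^ 2 - 1 := (abs_lt.1 hξ).1
  linarith

lemma one_add_norm_sq_sq_le_of_notMem_unitShell {ξ : E} (hξ : ξ ∉ unitShell E) :
    (1 + ‖ξ‖ ^ 2) ^ 2 ≤ 25 * shellSymbol ξ ^ 2 := by
  have hlow : 1 / 2 ≤ |shellSymbol ξ| := not_lt.1 hξ
  have hself : 4 * π ^ 2 * ‖ξ‖ ^ 2 - 1 ≤ |shellSymbol ξ| := le_abs_self _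
  have hπ : 1 ≤ 4 * π ^ 2 := by nlinarith [Real.pi_gt_three]
  have hlin : 1 + ‖ξ‖ ^ 2 ≤ 5 * |shellSymbol ξ| := by nlinarith [sq_nonneg ‖ξ‖]
  calc (1 + ‖ξ‖ ^ 2) ^ 2 ≤ (5 * |shellSymbol ξ|) ^ 2 := by gcongr
    _ = 25 * shellSymbol ξ ^ 2 := by rw [mul_pow, sq_abs]; norm_num

lemma setLIntegral_unitShell_cauchyKernel_le [NormedSpace ℝ E] [FiniteDimensional ℝ E]
    [Nontrivial E] [MeasurableSpace E] [BorelSpace E] (μ : Measure E) [μ.IsAddHaarMeasure]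
    {a : ℝ} (ha : 0 < a) :
    ∫⁻ ξ in unitShell E, ENNReal.ofReal (cauchyKernel a (shellSymbol ξ)) ∂μ ≤
      ENNReal.ofReal (μ.toSphere.real Set.univ / a) := by
  calc _ ≤ ∫⁻ ξ in closedBall 0 1, ENNReal.ofReal (cauchyKernel a (4 * π ^ 2 * ‖ξ‖ ^ 2 - 1)) ∂μ :=
        lintegral_mono_set unitShell_subset_closedBall
    _ ≤ μ.toSphere Set.univ * ∫⁻ r in Set.Ioi (0 : ℝ), ENNReal.ofReal (r ^ 0) *
          ENNReal.ofReal (cauchyKernel a (4 * π ^ 2 * r ^ 2 - 1)) :=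
        setLIntegral_closedBall_fun_norm_le μ Module.finrank_pos (k := 0)
          (f := fun r ↦ ENNReal.ofReal (cauchyKernel a (4 * π ^ 2 * r ^ 2 - 1))) (by fun_prop)
    _ ≤ μ.toSphere Set.univ * ∫⁻ r, ENNReal.ofReal (cauchyKernel a (2 * π * r + -1)) := by
        refine mul_le_mul_right ?_ _
        refine (setLIntegral_mono' measurableSet_Ioi fun r (hr : 0 < r) ↦ ?_).trans
          (setLIntegral_le_lintegral _ _)
        rw [pow_zero, ENNReal.ofReal_one, one_mul]
        refine ENNReal.ofReal_le_ofReal (cauchyKernel.le_of_abs_le ha ?_)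
        have hfactor : 4 * π ^ 2 * r ^ 2 - 1 = (2 * π * r + -1) * (2 * π * r + 1) := by ring
        rw [hfactor, abs_mul]
        refine le_mul_of_one_le_right (abs_nonneg _) ((le_add_of_nonneg_left ?_).trans
          (le_abs_self _))
        positivity
    _ ≤ ENNReal.ofReal (μ.toSphere.real Set.univ / a) := by
        rw [cauchyKernel.lintegral_comp_affine ha (by positivity),
          div_eq_mul_inv (μ.toSphere.real _), ENNReal.ofReal_mul measureReal_nonneg,
          ofReal_measureReal]
        gcongr
        rw [abs_of_pos (by positivity)]
        field_simp
        norm_num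

end Shell

section Slicing

variable {n : ℕ} {F : ℝ → ℝ → ℝ≥0∞}

lemma lintegral_apply_zero_norm_sq_eq (hF : Measurable (Function.uncurry F)) :
    ∫⁻ y : EuclideanSpace ℝ (Fin (n + 1)), F (y 0) (‖y‖ ^ 2) =
      ∫⁻ t, ∫⁻ z : EuclideanSpace ℝ (Fin n), F t (t ^ 2 + ‖z‖ ^ 2) := by
  have hF' : Measurable fun p : ℝ × ℝ ↦ F p.1 p.2 := hF
  have hFy : Measurable fun y : EuclideanSpace ℝ (Fin (n + 1)) ↦ F (y 0) (‖y‖ ^ 2) :=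
    hF'.comp (f := fun y : EuclideanSpace ℝ (Fin (n + 1)) ↦ (y 0, ‖y‖ ^ 2)) (by fun_prop)
  rw [← (PiLp.volume_preserving_toLp (Fin (n + 1))).lintegral_comp hFy,
    ← ((volume_preserving_piFinSuccAbove (fun _ : Fin (n + 1) ↦ ℝ) 0).symm).lintegral_comp
      (by fun_prop), Measure.volume_eq_prod, lintegral_prod _ (by fun_prop)]
  refine lintegral_congr fun t ↦ ?_
  have hFz : Measurable fun z : EuclideanSpace ℝ (Fin n) ↦ F t (t ^ 2 + ‖z‖ ^ 2) :=
    hF'.comp (f := fun z : EuclideanSpace ℝ (Fin n) ↦ (t, t ^ 2 + ‖z‖ ^ 2)) (by fun_prop)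
  rw [← (PiLp.volume_preserving_toLp (Fin n)).lintegral_comp hFz]
  refine lintegral_congr fun z ↦ ?_
  simp [EuclideanSpace.norm_sq_eq, Fin.sum_univ_succ, MeasurableEquiv.piFinSuccAbove]

lemma lintegral_inner_norm_sq_eq {e : EuclideanSpace ℝ (Fin (n + 1))} (he : ‖e‖ = 1)
    (hF : Measurable (Function.uncurry F)) :
    ∫⁻ y, F ⟪e, y⟫ (‖y‖ ^ 2) =
      ∫⁻ t, ∫⁻ z : EuclideanSpace ℝ (Fin n), F t (t ^ 2 + ‖z‖ ^ 2) := by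
  have hF' : Measurable fun p : ℝ × ℝ ↦ F p.1 p.2 := hF
  have hFy : Measurable fun y : EuclideanSpace ℝ (Fin (n + 1)) ↦ F (y 0) (‖y‖ ^ 2) :=
    hF'.comp (f := fun y : EuclideanSpace ℝ (Fin (n + 1)) ↦ (y 0, ‖y‖ ^ 2)) (by fun_prop)
  have he0 : Orthonormal ℝ (({0} : Set (Fin (n + 1))).domRestrict fun _ ↦ e) :=
    ⟨fun _ ↦ he, fun i j hij ↦ absurd (Subsingleton.elim i j) hij⟩
  obtain ⟨b, hb⟩ := he0.exists_orthonormalBasis_extension_of_card_eq (by simp)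
  rw [← lintegral_apply_zero_norm_sq_eq hF,
    ← b.measurePreserving_repr.lintegral_comp hFy]
  refine lintegral_congr fun y ↦ ?_
  rw [b.repr_apply_apply, hb 0 rfl, LinearIsometryEquiv.norm_map]

lemma setLIntegral_closedBall_inner_norm_sq_le {e : EuclideanSpace ℝ (Fin (n + 1))}
    (he : ‖e‖ = 1) (hF : Measurable (Function.uncurry F)) :
    ∫⁻ y in closedBall 0 1, F ⟪e, y⟫ (‖y‖ ^ 2) ≤
      ∫⁻ t, ∫⁻ z in closedBall (0 : EuclideanSpace ℝ (Fin n)) 1, F t (t ^ 2 + ‖z‖ ^ 2) := by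
  have hG : Measurable (Function.uncurry fun t s ↦ (Set.Iic (1 : ℝ)).indicator (F t) s) :=
    hF.indicator (measurableSet_Iic.preimage measurable_snd)
  have hball (y : EuclideanSpace ℝ (Fin (n + 1))) :
      (closedBall 0 1).indicator (fun y ↦ F ⟪e, y⟫ (‖y‖ ^ 2)) y =
        (Set.Iic (1 : ℝ)).indicator (F ⟪e, y⟫) (‖y‖ ^ 2) := by
    classical simp [Set.indicator_apply]
  rw [← lintegral_indicator measurableSet_closedBall, lintegral_congr hball,
    lintegral_inner_norm_sq_eq he hG]
  refine lintegral_mono fun t ↦ ?_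
  rw [← lintegral_indicator measurableSet_closedBall]
  refine lintegral_mono fun z ↦ ?_
  by_cases hz : t ^ 2 + ‖z‖ ^ 2 ≤ 1
  · have hz1 : ‖z‖ ^ 2 ≤ 1 := (le_add_of_nonneg_left (sq_nonneg t)).trans hz
    rw [Set.indicator_of_mem (s := Set.Iic 1) hz, Set.indicator_of_mem]
    rwa [mem_closedBall_zero_iff, ← sq_le_one_iff₀ (norm_nonneg z)]
  · rw [Set.indicator_of_notMem (s := Set.Iic 1) hz]
    exact zero_le

end Slicing

/-- The surface measure of the unit sphere of `ℝⁿ`. -/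
def sphereArea (n : ℕ) : ℝ :=
  (volume : Measure (EuclideanSpace ℝ (Fin n))).toSphere.real Set.univ

lemma sphereArea_nonneg (n : ℕ) : 0 ≤ sphereArea n := measureReal_nonneg

section ConvolutionKernel

variable {n : ℕ} {a : ℝ}

lemma setLIntegral_closedBall_cauchyKernel_quadratic_le (hn : 2 ≤ n) (ha : 0 < a) {κ : ℝ}
    (hκ : 0 < κ) (c : ℝ) :
    ∫⁻ z in closedBall (0 : EuclideanSpace ℝ (Fin n)) 1,
        ENNReal.ofReal (cauchyKernel a (κ * ‖z‖ ^ 2 + c)) ≤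
      ENNReal.ofReal (sphereArea n * (π / (2 * κ * a))) := by
  have : Nonempty (Fin n) := ⟨⟨0, by lia⟩⟩
  rw [ENNReal.ofReal_mul (sphereArea_nonneg n), sphereArea, ofReal_measureReal]
  refine (setLIntegral_closedBall_fun_norm_le (k := 1)
    (f := fun r ↦ ENNReal.ofReal (cauchyKernel a (κ * r ^ 2 + c))) volume (by simpa)
    (by fun_prop)).trans ?_
  simp only [pow_one]
  gcongr
  exact cauchyKernel.setLIntegral_Ioi_mul_quadratic_le ha hκ c

lemma setLIntegral_closedBall_cauchyKernel_mul_le (hn : 2 ≤ n) (ha : 0 < a)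
    {e : EuclideanSpace ℝ (Fin (n + 1))} (he : ‖e‖ = 1) {α κ : ℝ} (hα : α ≠ 0) (hκ : 0 < κ)
    (β γ δ : ℝ) :
    ∫⁻ y in closedBall 0 1, ENNReal.ofReal (cauchyKernel a (α * ⟪e, y⟫ + β)) *
        ENNReal.ofReal (cauchyKernel a (κ * ‖y‖ ^ 2 + (γ * ⟪e, y⟫ + δ))) ≤
      ENNReal.ofReal (π / (|α| * a) * (sphereArea n * (π / (2 * κ * a)))) := by
  calc _ ≤ ∫⁻ t, ∫⁻ z in closedBall (0 : EuclideanSpace ℝ (Fin n)) 1,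
          ENNReal.ofReal (cauchyKernel a (α * t + β)) *
            ENNReal.ofReal (cauchyKernel a (κ * (t ^ 2 + ‖z‖ ^ 2) + (γ * t + δ))) :=
        setLIntegral_closedBall_inner_norm_sq_le he
          (F := fun t s ↦ ENNReal.ofReal (cauchyKernel a (α * t + β)) *
            ENNReal.ofReal (cauchyKernel a (κ * s + (γ * t + δ)))) (by fun_prop)
    _ ≤ ∫⁻ t, ENNReal.ofReal (cauchyKernel a (α * t + β)) *
          ENNReal.ofReal (sphereArea n * (π / (2 * κ * a))) := by
        refine lintegral_mono fun t ↦ ?_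
        rw [lintegral_const_mul _ (by fun_prop)]
        gcongr
        simp only [mul_add, add_assoc, add_left_comm (κ * t ^ 2)]
        exact setLIntegral_closedBall_cauchyKernel_quadratic_le hn ha hκ _
    _ = _ := by
        rw [lintegral_mul_const _ (by fun_prop), cauchyKernel.lintegral_comp_affine ha hα,
          ← ENNReal.ofReal_mul (by positivity)]

-- The two symbols differ by an affine function of the component of `η` along `ξ`, so by
-- `cauchyKernel.mul_le` one factor can be integrated along `ξ` and the other across it.
lemma setLIntegral_unitShell_cauchyKernel_mul_le (hn : 2 ≤ n) (ha : 0 < a)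
    {ξ : EuclideanSpace ℝ (Fin (n + 1))} (hξ : ξ ≠ 0) :
    ∫⁻ η in unitShell _, ENNReal.ofReal
        (cauchyKernel a (shellSymbol η) * cauchyKernel a (shellSymbol (ξ - η))) ≤
      ENNReal.ofReal (sphereArea n / (‖ξ‖ * a ^ 2)) := by
  have hρ : 0 < ‖ξ‖ := norm_pos_iff.2 hξ
  obtain ⟨e, he, heξ⟩ : ∃ e : EuclideanSpace ℝ (Fin (n + 1)), ‖e‖ = 1 ∧ ξ = ‖ξ‖ • e :=
    ⟨‖ξ‖⁻¹ • ξ, norm_smul_inv_norm hξ, by rw [smul_inv_smul₀ hρ.ne']⟩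
  have hdist (η : EuclideanSpace ℝ (Fin (n + 1))) :
      ‖ξ - η‖ ^ 2 = ‖ξ‖ ^ 2 - 2 * (‖ξ‖ * ⟪e, η⟫) + ‖η‖ ^ 2 := by
    rw [← real_inner_smul_left, ← heξ, norm_sub_sq_real]
  let k : EuclideanSpace ℝ (Fin (n + 1)) → ℝ := fun η ↦
    cauchyKernel a (-(4 * π ^ 2 * ‖ξ‖) * ⟪e, η⟫ + 2 * π ^ 2 * ‖ξ‖ ^ 2)
  have hbound (γ δ : ℝ) := setLIntegral_closedBall_cauchyKernel_mul_le hn ha he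
    (α := -(4 * π ^ 2 * ‖ξ‖)) (κ := 4 * π ^ 2) (neg_ne_zero.2 (by positivity)) (by positivity)
    (2 * π ^ 2 * ‖ξ‖ ^ 2) γ δ
  calc _ ≤ ∫⁻ η in closedBall 0 1,
          (ENNReal.ofReal (k η) * ENNReal.ofReal (cauchyKernel a
              (4 * π ^ 2 * ‖η‖ ^ 2 + (0 * ⟪e, η⟫ + -1))) +
            ENNReal.ofReal (k η) * ENNReal.ofReal (cauchyKernel a
              (4 * π ^ 2 * ‖η‖ ^ 2 + (-(8 * π ^ 2 * ‖ξ‖) * ⟪e, η⟫ +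
                (4 * π ^ 2 * ‖ξ‖ ^ 2 - 1))))) := by
        refine (lintegral_mono_set unitShell_subset_closedBall).trans
          (lintegral_mono fun η ↦ ?_)
        rw [← mul_add, ← ENNReal.ofReal_add (cauchyKernel.nonneg _ _) (cauchyKernel.nonneg _ _),
          ← ENNReal.ofReal_mul (cauchyKernel.nonneg _ _)]
        refine ENNReal.ofReal_le_ofReal ((cauchyKernel.mul_le ha _ _).trans_eq ?_)
        simp only [shellSymbol, hdist]
        ring_nf
    _ ≤ _ := by
        rw [lintegral_add_left (by fun_prop)]
        refine (add_le_add (hbound _ _) (hbound _ _)).trans ?_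
        have := sphereArea_nonneg n
        rw [← ENNReal.ofReal_add (by positivity) (by positivity), abs_neg,
          abs_of_pos (by positivity)]
        refine ENNReal.ofReal_le_ofReal ?_
        have hπ : 1 ≤ 16 * π ^ 2 := by nlinarith [Real.pi_gt_three]
        field_simp
        linarith [mul_le_mul_of_nonneg_right hπ this]

end ConvolutionKernel

/-! ### The Fourier transform on `L²` -/

section L2Fourier

variable {E : Type*} [NormedAddCommGroup E] [InnerProductSpace ℝ E] [FiniteDimensional ℝ E]
  [MeasurableSpace E] [BorelSpace E]

lemma lintegral_enorm_sq_eq_ofReal {α : Type*} [MeasurableSpace α] {μ : Measure α} {f : α → ℂ}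
    (hf : MemLp f 2 μ) : ∫⁻ x, ‖f x‖ₑ ^ 2 ∂μ = .ofReal (∫ x, ‖f x‖ ^ 2 ∂μ) := by
  rw [ofReal_integral_eq_lintegral_ofReal (hf.integrable_norm_pow two_ne_zero)
    (ae_of_all _ fun x ↦ by positivity)]
  simp only [ENNReal.ofReal_pow (norm_nonneg _), ofReal_norm]

lemma ae_eq_of_integral_mul_schwartz {f f' : E → ℂ} (hf : LocallyIntegrable f)
    (hf' : LocallyIntegrable f') (h : ∀ ψ : 𝓢(E, ℂ), ∫ x, f x * ψ x = ∫ x, f' x * ψ x) :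
    f =ᵐ[volume] f' := by
  refine ae_eq_of_integral_contDiff_smul_eq hf hf' fun φ hφ hφc ↦ ?_
  have hc : HasCompactSupport fun x ↦ (φ x : ℂ) :=
    hφc.comp_left (g := fun r : ℝ ↦ (r : ℂ)) Complex.ofReal_zero
  have hφs : ContDiff ℝ (⊤ : ℕ∞) fun x ↦ (φ x : ℂ) := Complex.ofRealCLM.contDiff.comp hφ
  have hval (x : E) : hc.toSchwartzMap hφs x = (φ x : ℂ) := rfl
  simpa only [hval, Complex.real_smul, mul_comm] using h (hc.toSchwartzMap hφs)

/-- `u` is the Fourier transform of `g`, both being square integrable functions. The relational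
form spares the passage to classes in `Lp` and leaves representatives free. -/
structure IsL2Fourier (g u : E → ℂ) : Prop where
  memLp_left : MemLp g 2
  memLp_right : MemLp u 2
  fourier_toLp : 𝓕 (memLp_left.toLp g) = memLp_right.toLp u

namespace IsL2Fourier

variable {g u g' u' : E → ℂ}

lemma congr (h : IsL2Fourier g u) (hg : g =ᵐ[volume] g') (hu : u =ᵐ[volume] u') :
    IsL2Fourier g' u' where
  memLp_left := h.memLp_left.ae_eq hg
  memLp_right := h.memLp_right.ae_eq hu
  fourier_toLp := by
    rw [← MemLp.toLp_congr h.memLp_left _ hg, ← MemLp.toLp_congr h.memLp_right _ hu,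
      h.fourier_toLp]

lemma unique (h : IsL2Fourier g u) (h' : IsL2Fourier g u') : u =ᵐ[volume] u' := by
  rw [← MemLp.toLp_eq_toLp_iff h.memLp_right h'.memLp_right, ← h.fourier_toLp, h'.fourier_toLp]

lemma exists_right (hg : MemLp g 2) : ∃ u, IsL2Fourier g u :=
  ⟨_, hg, Lp.memLp (𝓕 (hg.toLp g)), (Lp.toLp_coeFn _ _).symm⟩

lemma exists_left (hu : MemLp u 2) : ∃ g, IsL2Fourier g u :=
  ⟨_, Lp.memLp (𝓕⁻ (hu.toLp u)), hu, by
    rw [Lp.toLp_coeFn, FourierTransform.fourier_fourierInv_eq]⟩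

lemma zero : IsL2Fourier (0 : E → ℂ) 0 where
  memLp_left := .zero
  memLp_right := .zero
  fourier_toLp := by rw [MemLp.toLp_zero, FourierTransform.fourier_zero]

lemma add (h : IsL2Fourier g u) (h' : IsL2Fourier g' u') : IsL2Fourier (g + g') (u + u') where
  memLp_left := h.memLp_left.add h'.memLp_left
  memLp_right := h.memLp_right.add h'.memLp_right
  fourier_toLp := by
    rw [MemLp.toLp_add h.memLp_left h'.memLp_left, MemLp.toLp_add h.memLp_right h'.memLp_right,
      FourierTransform.fourier_add, h.fourier_toLp, h'.fourier_toLp]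

lemma sum {ι : Type*} (s : Finset ι) {g u : ι → E → ℂ} (h : ∀ i, IsL2Fourier (g i) (u i)) :
    IsL2Fourier (∑ i ∈ s, g i) (∑ i ∈ s, u i) := by
  classical
  induction s using Finset.induction_on with
  | empty => exact zero
  | insert i s hi ih =>
    rw [Finset.sum_insert hi, Finset.sum_insert hi]
    exact (h i).add ih

lemma integral_mul_schwartz (h : IsL2Fourier g u) (ψ : 𝓢(E, ℂ)) :
    ∫ x, u x * ψ x = ∫ ξ, g ξ * 𝓕 ψ ξ := by
  have key := congrArg (· ψ) (Lp.fourier_toTemperedDistribution_eq (h.memLp_left.toLp g))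
  simp only [TemperedDistribution.fourier_apply, Lp.toTemperedDistribution_apply, smul_eq_mul,
    h.fourier_toLp] at key
  calc ∫ x, u x * ψ x = ∫ x, ψ x * h.memLp_right.toLp u x :=
        integral_congr_ae <| h.memLp_right.coeFn_toLp.mono fun x hx ↦ by simp only [hx, mul_comm]
    _ = ∫ ξ, 𝓕 ψ ξ * h.memLp_left.toLp g ξ := key.symm
    _ = ∫ ξ, g ξ * 𝓕 ψ ξ :=
        integral_congr_ae <| h.memLp_left.coeFn_toLp.mono fun ξ hξ ↦ by simp only [hξ, mul_comm]

lemma ae_eq_left_of_integral_mul_schwartz (h : IsL2Fourier g u) (hg' : LocallyIntegrable g')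
    (hpair : ∀ ψ : 𝓢(E, ℂ), ∫ x, u x * ψ x = ∫ ξ, g' ξ * 𝓕 ψ ξ) : g =ᵐ[volume] g' :=
  ae_eq_of_integral_mul_schwartz (h.memLp_left.locallyIntegrable one_le_two) hg' fun ψ ↦ by
    simpa only [h.integral_mul_schwartz, FourierTransform.fourier_fourierInv_eq]
      using hpair (𝓕⁻ ψ)

lemma lintegral_enorm_sq_eq (h : IsL2Fourier g u) : ∫⁻ x, ‖u x‖ₑ ^ 2 = ∫⁻ ξ, ‖g ξ‖ₑ ^ 2 := by
  have hnorm : eLpNorm u 2 = eLpNorm g 2 := by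
    have := Lp.norm_fourier_eq (h.memLp_left.toLp g)
    rwa [h.fourier_toLp, Lp.norm_toLp, Lp.norm_toLp,
      ENNReal.toReal_eq_toReal_iff' h.memLp_right.eLpNorm_ne_top
        h.memLp_left.eLpNorm_ne_top] at this
  have hsq (f : E → ℂ) : ∫⁻ x, ‖f x‖ₑ ^ 2 = eLpNorm f 2 ^ 2 := by
    simpa using (eLpNorm_nnreal_pow_eq_lintegral (f := f) (p := 2) two_ne_zero).symm
  rw [hsq, hsq, hnorm]

lemma integral_norm_sq_eq (h : IsL2Fourier g u) : ∫ x, ‖u x‖ ^ 2 = ∫ ξ, ‖g ξ‖ ^ 2 := by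
  have key := h.lintegral_enorm_sq_eq
  rwa [lintegral_enorm_sq_eq_ofReal h.memLp_right, lintegral_enorm_sq_eq_ofReal h.memLp_left,
    ENNReal.ofReal_eq_ofReal_iff (by positivity) (by positivity)] at key

lemma ae_eq_fourier_of_integrable (h : IsL2Fourier g u) (hg : Integrable g) :
    u =ᵐ[volume] 𝓕 g := by
  have hcont : Continuous (𝓕 g) := VectorFourier.fourierIntegral_continuous
    Real.continuous_fourierChar (by exact continuous_inner) hg
  refine ae_eq_of_integral_mul_schwartz (h.memLp_right.locallyIntegrable one_le_two)
    hcont.locallyIntegrable fun ψ ↦ ?_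
  rw [h.integral_mul_schwartz, SchwartzMap.fourier_coe]
  have key := VectorFourier.integral_fourierIntegral_smul_eq_flip (e := Real.fourierChar)
    (μ := (volume : Measure E)) (ν := (volume : Measure E)) (L := innerₗ E) (f := g) (g := ψ)
    Real.continuous_fourierChar (by exact continuous_inner) hg ψ.integrable
  simp only [smul_eq_mul, flip_innerₗ] at key
  exact key.symm

lemma ae_enorm_le_lintegral (h : IsL2Fourier g u) (hg : Integrable g) :
    ∀ᵐ x, ‖u x‖ₑ ≤ ∫⁻ ξ, ‖g ξ‖ₑ := by
  filter_upwards [h.ae_eq_fourier_of_integrable hg] with x hx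
  rw [hx, Real.fourier_eq]
  exact (enorm_integral_le_lintegral_enorm _).trans_eq <| by
    simp only [← ofReal_norm, Circle.norm_smul]

end IsL2Fourier

end L2Fourier

/-! ### Weak derivatives on the Fourier side -/

lemma exists_seq_cutoff (E : Type*) [NormedAddCommGroup E] [InnerProductSpace ℝ E]
    [FiniteDimensional ℝ E] :
    ∃ (χ : ℕ → E → ℝ) (K : ℝ), (∀ n, ContDiff ℝ (⊤ : ℕ∞) (χ n)) ∧
      (∀ n, HasCompactSupport (χ n)) ∧ (∀ n x, ‖χ n x‖ ≤ 1) ∧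
      (∀ n x, ‖fderiv ℝ (χ n) x‖ ≤ K * (n + 1 : ℝ)⁻¹) ∧
      ∀ x, Tendsto (χ · x) atTop (𝓝 1) := by
  let b : ContDiffBump (0 : E) := ⟨1, 2, one_pos, one_lt_two⟩
  obtain ⟨K, hK⟩ := b.contDiff.lipschitzWith_of_hasCompactSupport b.hasCompactSupport one_ne_zero
  have hpos (n : ℕ) : 0 < (n + 1 : ℝ)⁻¹ := by positivity
  refine ⟨fun n x ↦ b ((n + 1 : ℝ)⁻¹ • x), K, fun n ↦ b.contDiff.comp (contDiff_const_smul _),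
    fun n ↦ b.hasCompactSupport.comp_smul (hpos n).ne', fun n x ↦ ?_, fun n x ↦ ?_, fun x ↦ ?_⟩
  · rw [Real.norm_of_nonneg (b.nonneg' _)]
    exact b.le_one
  · have hlip := hK.comp (lipschitzWith_smul (α := ℝ) (β := E) (n + 1 : ℝ)⁻¹)
    refine (norm_fderiv_le_of_lipschitz ℝ hlip).trans_eq ?_
    rw [NNReal.coe_mul, coe_nnnorm, Real.norm_of_nonneg (hpos n).le]
  · have hscale : Tendsto (fun n : ℕ ↦ (n + 1 : ℝ)⁻¹ • x) atTop (𝓝 0) := by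
      simpa only [one_div, zero_smul] using
        (tendsto_one_div_add_atTop_nhds_zero_nat (𝕜 := ℝ)).smul_const x
    have hone : b 0 = 1 := b.one_of_mem_closedBall (Metric.mem_closedBall_self zero_le_one)
    simpa only [hone, Function.comp_def] using (b.continuous.tendsto 0).comp hscale

lemma tendsto_integral_mul_of_norm_le {α : Type*} [MeasurableSpace α] {μ : Measure α} {f G : α → ℂ}
    {F : ℕ → α → ℂ} {B : α → ℝ} (hf : MemLp f 2 μ) (hB : MemLp B 2 μ)
    (hF : ∀ n, AEStronglyMeasurable (F n) μ) (hFB : ∀ n x, ‖F n x‖ ≤ B x)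
    (hFG : ∀ x, Tendsto (F · x) atTop (𝓝 (G x))) :
    Tendsto (fun n ↦ ∫ x, f x * F n x ∂μ) atTop (𝓝 (∫ x, f x * G x ∂μ)) :=
  tendsto_integral_of_dominated_convergence (fun x ↦ ‖f x‖ * B x)
    (fun n ↦ hf.aestronglyMeasurable.mul (hF n)) (hf.norm.integrable_mul hB)
    (fun n ↦ ae_of_all _ fun x ↦ by
      rw [norm_mul]
      exact mul_le_mul_of_nonneg_left (hFB n x) (norm_nonneg _))
    (ae_of_all _ fun x ↦ (hFG x).const_mul _)

section WeakDerivatives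

variable {N : ℕ}

lemma TestFun.pderivC {φ : Esp N → ℂ} (h : TestFun φ) (i : Fin N) : TestFun (pderivC i φ) :=
  ⟨(h.1.fderiv_right (m := (⊤ : ℕ∞)) (by simp)).clm_apply contDiff_const,
    h.2.fderiv_apply (𝕜 := ℝ) _⟩

lemma TestFun.memLp {φ : Esp N → ℂ} (h : TestFun φ) : MemLp φ 2 :=
  h.1.continuous.memLp_of_hasCompactSupport h.2

lemma pderivC_schwartz (i : Fin N) (ψ : 𝓢(Esp N, ℂ)) :
    pderivC i ψ = LineDeriv.lineDerivOp (EuclideanSpace.single i (1 : ℝ)) ψ := by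
  ext x
  rw [SchwartzMap.lineDerivOp_apply_eq_fderiv]
  rfl

lemma fourier_lineDerivOp_single (i : Fin N) (ψ : 𝓢(Esp N, ℂ)) (ξ : Esp N) :
    𝓕 (LineDeriv.lineDerivOp (EuclideanSpace.single i (1 : ℝ)) ψ) ξ =
      2 * π * Complex.I * ξ i * 𝓕 ψ ξ := by
  rw [SchwartzMap.fourier_lineDerivOp_eq, smul_apply, smul_eq_mul,
    SchwartzMap.smulLeftCLM_apply_apply (by fun_prop)]
  simp [EuclideanSpace.inner_single_right, mul_assoc]

lemma exists_seq_testFun_tendsto (ψ : 𝓢(Esp N, ℂ)) :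
    ∃ φ : ℕ → Esp N → ℂ, (∀ n, TestFun (φ n)) ∧ ∀ f : Esp N → ℂ, MemLp f 2 →
      Tendsto (fun n ↦ ∫ x, f x * φ n x) atTop (𝓝 (∫ x, f x * ψ x)) ∧
      ∀ i, Tendsto (fun n ↦ ∫ x, f x * pderivC i (φ n) x) atTop
        (𝓝 (∫ x, f x * pderivC i ψ x)) := by
  obtain ⟨χ, K, hχ, hχc, hχ1, hχd, hχlim⟩ := exists_seq_cutoff (Esp N)
  have hK (n : ℕ) : K * (n + 1 : ℝ)⁻¹ ≤ |K| :=
    (mul_le_mul_of_nonneg_right (le_abs_self K) (by positivity)).trans <|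
      mul_le_of_le_one_right (abs_nonneg K) (inv_le_one_of_one_le₀ (by simp))
  have htest (n : ℕ) : TestFun fun x ↦ χ n x • ψ x :=
    ⟨(hχ n).smul (ψ.smooth _), (hχc n).smul_right⟩
  have hderiv (n : ℕ) (i : Fin N) (x : Esp N) : pderivC i (fun x ↦ χ n x • ψ x) x =
      χ n x • pderivC i ψ x + fderiv ℝ (χ n) x (EuclideanSpace.single i 1) • ψ x := by
    simp only [pderivC, fderiv_fun_smul ((hχ n).differentiable (by simp) x) ψ.differentiableAt,
      add_apply, smul_apply, ContinuousLinearMap.smulRight_apply]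
  have hpart (n : ℕ) (i : Fin N) (x : Esp N) :
      ‖fderiv ℝ (χ n) x (EuclideanSpace.single i 1)‖ ≤ K * (n + 1 : ℝ)⁻¹ :=
    ((fderiv ℝ (χ n) x).le_opNorm _).trans (by simpa using hχd n x)
  have hzero : Tendsto (fun n : ℕ ↦ K * (n + 1 : ℝ)⁻¹) atTop (𝓝 0) := by
    simpa only [one_div, mul_zero] using
      (tendsto_one_div_add_atTop_nhds_zero_nat (𝕜 := ℝ)).const_mul K
  refine ⟨fun n x ↦ χ n x • ψ x, htest, fun f hf ↦ ⟨?_, fun i ↦ ?_⟩⟩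
  · refine tendsto_integral_mul_of_norm_le hf (ψ.memLp 2).norm
      (fun n ↦ (htest n).1.continuous.aestronglyMeasurable) (fun n x ↦ ?_) fun x ↦ ?_
    · rw [norm_smul]
      exact mul_le_of_le_one_left (norm_nonneg _) (hχ1 n x)
    · simpa only [one_smul] using (hχlim x).smul_const (ψ x)
  · have hψ : MemLp (pderivC i ψ) 2 := by
      rw [pderivC_schwartz]
      exact SchwartzMap.memLp _ 2 volume
    refine tendsto_integral_mul_of_norm_le hf (hψ.norm.add ((ψ.memLp 2).norm.const_mul |K|))
      (fun n ↦ ((htest n).pderivC i).1.continuous.aestronglyMeasurable) (fun n x ↦ ?_) fun x ↦ ?_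
    · rw [hderiv]
      refine norm_add_le_of_le ?_ ?_ <;> rw [norm_smul]
      · exact mul_le_of_le_one_left (norm_nonneg _) (hχ1 n x)
      · exact mul_le_mul_of_nonneg_right ((hpart n i x).trans (hK n)) (norm_nonneg _)
    · simp only [hderiv]
      simpa only [one_smul, zero_smul, add_zero] using ((hχlim x).smul_const (pderivC i ψ x)).add
        ((squeeze_zero_norm (fun n ↦ hpart n i x) hzero).smul_const (ψ x))

lemma sum_integral_mul_pderivC_schwartz {ι : Type*} [Fintype ι] {u : ι → Esp N → ℂ} {w : Esp N → ℂ}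
    {m : ι → Fin N} (hu : ∀ j, MemLp (u j) 2) (hw : MemLp w 2)
    (h : ∀ φ, TestFun φ → ∑ j, ∫ x, u j x * pderivC (m j) φ x = -∫ x, w x * φ x)
    (ψ : 𝓢(Esp N, ℂ)) : ∑ j, ∫ x, u j x * pderivC (m j) ψ x = -∫ x, w x * ψ x := by
  obtain ⟨φ, hφ, hlim⟩ := exists_seq_testFun_tendsto ψ
  refine tendsto_nhds_unique (tendsto_finsetSum _ fun j _ ↦ (hlim _ (hu j)).2 (m j)) ?_
  simpa only [h _ (hφ _)] using (hlim _ hw).1.neg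

lemma IsL2Fourier.ae_eq_sum_of_weakDeriv {ι : Type*} [Fintype ι] {g u : ι → Esp N → ℂ}
    {h w : Esp N → ℂ} {m : ι → Fin N} (hu : ∀ j, IsL2Fourier (g j) (u j)) (hw : IsL2Fourier h w)
    (huw : ∀ φ, TestFun φ → ∑ j, ∫ x, u j x * pderivC (m j) φ x = -∫ x, w x * φ x) :
    h =ᵐ[volume] fun ξ ↦ ∑ j, -(2 * π * Complex.I * ξ (m j)) * g j ξ := by
  refine hw.ae_eq_left_of_integral_mul_schwartz ?_ fun ψ ↦ ?_
  · have hloc (j : ι) : LocallyIntegrable fun ξ ↦ -(2 * π * Complex.I * ξ (m j)) * g j ξ := by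
      rw [← locallyIntegrableOn_univ]
      exact ((hu j).memLp_left.locallyIntegrable one_le_two).locallyIntegrableOn _
        |>.continuousOn_mul (by fun_prop) isOpen_univ.isLocallyClosed
    exact locallyIntegrable_finsetSum _ fun j _ ↦ hloc j
  · have hint (j : ι) : Integrable fun ξ ↦ -(2 * π * Complex.I * ξ (m j)) * g j ξ * 𝓕 ψ ξ := by
      have := (hu j).memLp_left.integrable_mul (SchwartzMap.memLp
        (𝓕 (LineDeriv.lineDerivOp (EuclideanSpace.single (m j) (1 : ℝ)) ψ)) 2 volume)
      refine this.neg.congr (ae_of_all _ fun ξ ↦ ?_)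
      simp only [Pi.neg_apply, Pi.mul_apply, fourier_lineDerivOp_single]
      ring
    have key := sum_integral_mul_pderivC_schwartz (fun j ↦ (hu j).memLp_right) hw.memLp_right huw ψ
    rw [← neg_eq_iff_eq_neg] at key
    simp only [← key, Finset.sum_mul, integral_finsetSum _ fun j _ ↦ hint j,
      ← Finset.sum_neg_distrib, ← integral_neg]
    refine Finset.sum_congr rfl fun j _ ↦ ?_
    rw [integral_neg, pderivC_schwartz, (hu j).integral_mul_schwartz, ← integral_neg]
    congr 1 with ξ
    rw [fourier_lineDerivOp_single]
    ring

namespace H2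

lemma sum_integral_grad_mul_pderivC (U : H2 N) {φ : Esp N → ℂ} (hφ : TestFun φ) :
    ∑ i, ∫ x, U.grad i x * pderivC i φ x = -∫ x, U.lapl x * φ x := by
  rw [← U.lapl_spec φ hφ]
  simp only [lapC, Finset.mul_sum]
  rw [integral_finsetSum, ← Finset.sum_neg_distrib]
  · exact Finset.sum_congr rfl fun i _ ↦ by rw [U.grad_spec i _ (hφ.pderivC i), neg_neg]
  · exact fun i _ ↦ U.u_mem.integrable_mul ((hφ.pderivC i).pderivC i).memLp

variable {U : H2 N} {g : Esp N → ℂ}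

lemma ae_eq_of_isL2Fourier_grad (hg : IsL2Fourier g U.u) {i : Fin N} {h : Esp N → ℂ}
    (hh : IsL2Fourier h (U.grad i)) :
    h =ᵐ[volume] fun ξ ↦ -(2 * π * Complex.I * ξ i) * g ξ := by
  simpa using IsL2Fourier.ae_eq_sum_of_weakDeriv (ι := Unit) (m := fun _ ↦ i) (fun _ ↦ hg) hh
    fun φ hφ ↦ by simpa using U.grad_spec i φ hφ

lemma ae_eq_of_isL2Fourier_lapl (hg : IsL2Fourier g U.u) {h : Esp N → ℂ}
    (hh : IsL2Fourier h U.lapl) :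
    h =ᵐ[volume] fun ξ ↦ -(4 * π ^ 2 * ‖ξ‖ ^ 2 : ℝ) * g ξ := by
  choose k hk using fun i ↦ IsL2Fourier.exists_left (U.grad_mem i)
  filter_upwards [IsL2Fourier.ae_eq_sum_of_weakDeriv (m := id) hk hh
    fun φ hφ ↦ U.sum_integral_grad_mul_pderivC hφ,
    ae_all_iff.2 fun i ↦ ae_eq_of_isL2Fourier_grad hg (hk i)] with ξ hξ hk
  simp only [hξ, hk, id, EuclideanSpace.real_norm_sq_eq, Complex.ofReal_mul, Complex.ofReal_sum,
    Finset.mul_sum, ← Finset.sum_neg_distrib, Finset.sum_mul]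
  refine Finset.sum_congr rfl fun i _ ↦ ?_
  push_cast
  linear_combination (4 * π ^ 2 * (ξ i : ℂ) ^ 2 * g ξ) * Complex.I_sq

lemma integrable_sq_mul_norm_fourier_sq (hg : IsL2Fourier g U.u) :
    Integrable fun ξ ↦ (4 * π ^ 2 * ‖ξ‖ ^ 2) ^ 2 * ‖g ξ‖ ^ 2 := by
  obtain ⟨h, hh⟩ := IsL2Fourier.exists_left U.lapl_mem
  refine (hh.memLp_left.integrable_norm_pow two_ne_zero).congr ?_
  filter_upwards [ae_eq_of_isL2Fourier_lapl hg hh] with ξ hξ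
  rw [hξ, norm_mul, norm_neg, Complex.norm_real, mul_pow, Real.norm_eq_abs, sq_abs]

lemma lapSq_eq_integral (hg : IsL2Fourier g U.u) :
    U.lapSq = ∫ ξ, (4 * π ^ 2 * ‖ξ‖ ^ 2) ^ 2 * ‖g ξ‖ ^ 2 := by
  obtain ⟨h, hh⟩ := IsL2Fourier.exists_left U.lapl_mem
  rw [lapSq, hh.integral_norm_sq_eq]
  refine integral_congr_ae ?_
  filter_upwards [ae_eq_of_isL2Fourier_lapl hg hh] with ξ hξ
  rw [hξ, norm_mul, norm_neg, Complex.norm_real, mul_pow, Real.norm_eq_abs, sq_abs]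

lemma gradSq_eq_integral (hg : IsL2Fourier g U.u) :
    U.gradSq = ∫ ξ, 4 * π ^ 2 * ‖ξ‖ ^ 2 * ‖g ξ‖ ^ 2 := by
  choose k hk using fun i ↦ IsL2Fourier.exists_left (U.grad_mem i)
  have hnorm (i : Fin N) : (fun ξ ↦ ‖k i ξ‖ ^ 2) =ᵐ[volume]
      fun ξ ↦ 4 * π ^ 2 * (ξ i) ^ 2 * ‖g ξ‖ ^ 2 := by
    filter_upwards [ae_eq_of_isL2Fourier_grad hg (hk i)] with ξ hξ
    simp [hξ, mul_pow]
    norm_num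
  have hint (i : Fin N) := ((hk i).memLp_left.integrable_norm_pow two_ne_zero).congr (hnorm i)
  simp only [EuclideanSpace.real_norm_sq_eq, Finset.mul_sum, Finset.sum_mul]
  rw [integral_finsetSum _ fun i _ ↦ hint i]
  exact Finset.sum_congr rfl fun i _ ↦ by
    rw [(hk i).integral_norm_sq_eq, integral_congr_ae (hnorm i)]

end H2

end WeakDerivatives

/-! ### Estimates on the shell -/

section MeasureSpace

variable {α : Type*} [MeasurableSpace α] {μ : Measure α}

lemma sq_lintegral_le_lintegral_mul_lintegral {f k w : α → ℝ≥0∞} (hf : AEMeasurable f μ)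
    (hk : AEMeasurable k μ) (hw : AEMeasurable w μ) (hkw : ∀ x, k x * w x = 1) :
    (∫⁻ x, f x ∂μ) ^ 2 ≤ (∫⁻ x, k x ∂μ) * ∫⁻ x, w x * f x ^ 2 ∂μ := by
  have hsplit (x : α) : f x = k x ^ (1 / 2 : ℝ) * (w x * f x ^ 2) ^ (1 / 2 : ℝ) := by
    rw [← ENNReal.mul_rpow_of_nonneg _ _ (by norm_num), ← mul_assoc, hkw, one_mul,
      ← ENNReal.rpow_two, ← ENNReal.rpow_mul]
    norm_num
  have hsq (x : ℝ≥0∞) : (x ^ (1 / 2 : ℝ)) ^ (2 : ℝ) = x := by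
    rw [← ENNReal.rpow_mul]
    norm_num
  have hölder := ENNReal.lintegral_mul_le_Lp_mul_Lq μ Real.HolderConjugate.two_two
    (hk.pow_const (1 / 2 : ℝ)) ((hw.mul (hf.pow_const 2)).pow_const (1 / 2 : ℝ))
  simp only [Pi.mul_apply, hsq, ← hsplit] at hölder
  refine (pow_le_pow_left₀ zero_le hölder 2).trans_eq ?_
  rw [mul_pow, ← ENNReal.rpow_two, ← ENNReal.rpow_two, hsq, hsq]

lemma lintegral_rpow_le_of_ae_sq_le {f : α → ℝ≥0∞} (hf : AEMeasurable f μ) {B : ℝ≥0∞}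
    (hB : ∀ᵐ x ∂μ, f x ^ 2 ≤ B) {s r : ℝ} (hs : 0 ≤ s) (hr : 0 ≤ r) :
    ∫⁻ x, f x ^ (2 * s + r) ∂μ ≤ B ^ s * ∫⁻ x, f x ^ r ∂μ := by
  rw [← lintegral_const_mul'' _ (hf.pow_const r)]
  refine lintegral_mono_ae (hB.mono fun x hx ↦ ?_)
  rw [ENNReal.rpow_add_of_nonneg _ _ (by positivity) hr, ENNReal.rpow_mul, ENNReal.rpow_two]
  gcongr

lemma lintegral_lintegral_mul_sub {G : Type*} [AddGroup G] [MeasurableSpace G] [MeasurableAdd G]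
    [MeasurableSub₂ G] (ν : Measure G) [SFinite ν] [ν.IsAddRightInvariant] {f g : G → ℝ≥0∞}
    (hf : Measurable f) (hg : Measurable g) :
    ∫⁻ x, ∫⁻ y, f y * g (x - y) ∂ν ∂ν = (∫⁻ x, f x ∂ν) * ∫⁻ x, g x ∂ν := by
  rw [lintegral_lintegral_swap (by fun_prop), ← lintegral_mul_const _ hf]
  refine lintegral_congr fun y ↦ ?_
  rw [lintegral_const_mul _ (by fun_prop), lintegral_sub_right_eq_self]

end MeasureSpace

lemma ofReal_sq_mul_cauchyKernel_mul {a : ℝ} (ha : 0 < a) (s : ℝ) :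
    ENNReal.ofReal (a ^ 2 * cauchyKernel a s) * ENNReal.ofReal (1 + (s / a) ^ 2) = 1 := by
  have hk := cauchyKernel.nonneg a s
  rw [← ENNReal.ofReal_mul (by positivity), ← ENNReal.ofReal_one]
  congr 1
  unfold cauchyKernel
  field_simp
  ring

section ShellEnergy

variable {E : Type*} [NormedAddCommGroup E] [InnerProductSpace ℝ E] [FiniteDimensional ℝ E]
  [MeasurableSpace E] [BorelSpace E] {a : ℝ} {g u : E → ℂ}

/-- The mass of `g` plus `a⁻²` times the integral of `(4π²|ξ|² - 1)²|g|²`. When `g` is the Fourier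
transform of `u` the latter integral is the quadratic part of `E(u) + ‖u‖²`, and `a` is the width
of the neighbourhood of the sphere `4π²|ξ|² = 1` on which this quantity is comparable to the
mass. -/
def shellEnergy (a : ℝ) (g : E → ℂ) : ℝ≥0∞ :=
  ∫⁻ ξ, ENNReal.ofReal (1 + (shellSymbol ξ / a) ^ 2) * ‖g ξ‖ₑ ^ 2

lemma shellEnergy_indicator_le (s : Set E) : shellEnergy a (s.indicator g) ≤ shellEnergy a g :=
  lintegral_mono fun _ ↦ by gcongr; exact enorm_indicator_le_enorm_self g _

lemma lintegral_enorm_sq_le_shellEnergy : ∫⁻ ξ, ‖g ξ‖ₑ ^ 2 ≤ shellEnergy a g :=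
  lintegral_mono fun _ ↦ le_mul_of_one_le_left' <| ENNReal.one_le_ofReal.2 <|
    le_add_of_nonneg_right (sq_nonneg _)

lemma sq_lintegral_enorm_le_shellEnergy [Nontrivial E] (ha : 0 < a) (hg : AEMeasurable g)
    (hsupp : g.support ⊆ unitShell E) :
    (∫⁻ ξ, ‖g ξ‖ₑ) ^ 2 ≤
      ENNReal.ofReal ((volume : Measure E).toSphere.real Set.univ * a) * shellEnergy a g := by
  have hker : ∫⁻ ξ in unitShell E, ENNReal.ofReal (a ^ 2 * cauchyKernel a (shellSymbol ξ)) ≤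
      ENNReal.ofReal ((volume : Measure E).toSphere.real Set.univ * a) := by
    simp_rw [ENNReal.ofReal_mul (sq_nonneg a)]
    rw [lintegral_const_mul _ (by fun_prop)]
    refine (mul_le_mul_right (setLIntegral_unitShell_cauchyKernel_le volume ha) _).trans_eq ?_
    rw [← ENNReal.ofReal_mul (sq_nonneg a)]
    congr 1
    field_simp
  rw [← setLIntegral_eq_of_support_subset (f := fun ξ ↦ ‖g ξ‖ₑ) (s := unitShell E)
    (by simpa [Function.support] using hsupp)]
  refine (sq_lintegral_le_lintegral_mul_lintegral hg.enorm.restrict (by fun_prop) (by fun_prop)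
    fun ξ ↦ ofReal_sq_mul_cauchyKernel_mul ha (shellSymbol ξ)).trans ?_
  exact mul_le_mul' hker (setLIntegral_le_lintegral _ _)

lemma integrable_of_support_subset_unitShell [Nontrivial E] (ha : 0 < a)
    (hg : AEStronglyMeasurable g) (hsupp : g.support ⊆ unitShell E) (hfin : shellEnergy a g ≠ ∞) :
    Integrable g := by
  refine ⟨hg, ?_⟩
  have h := (sq_lintegral_enorm_le_shellEnergy ha hg.aemeasurable hsupp).trans_lt
    (ENNReal.mul_lt_top ENNReal.ofReal_lt_top hfin.lt_top)
  exact (ENNReal.pow_lt_top_iff.1 h).resolve_right two_ne_zero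

lemma IsL2Fourier.ae_enorm_sq_le_shellEnergy [Nontrivial E] (h : IsL2Fourier g u) (ha : 0 < a)
    (hsupp : g.support ⊆ unitShell E) (hfin : shellEnergy a g ≠ ∞) :
    ∀ᵐ x, ‖u x‖ₑ ^ 2 ≤
      ENNReal.ofReal ((volume : Measure E).toSphere.real Set.univ * a) * shellEnergy a g := by
  have hgm := h.memLp_left.aestronglyMeasurable
  filter_upwards [h.ae_enorm_le_lintegral
    (integrable_of_support_subset_unitShell ha hgm hsupp hfin)] with x hx
  exact (pow_le_pow_left₀ zero_le hx 2).trans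
    (sq_lintegral_enorm_le_shellEnergy ha hgm.aemeasurable hsupp)

end ShellEnergy

section Orthant

variable {N : ℕ}

/-- The set of vectors whose nonnegative coordinates are exactly those in `s`. The frequencies are
cut along these sets because adding two vectors of the same orthant does not shorten them. -/
def orthant (s : Finset (Fin N)) : Set (EuclideanSpace ℝ (Fin N)) := {x | ∀ i, 0 ≤ x i ↔ i ∈ s}

lemma measurableSet_orthant (s : Finset (Fin N)) : MeasurableSet (orthant s) := by
  simp only [orthant, Set.ofPred_forall]
  refine .iInter fun i ↦ ?_
  by_cases hi : i ∈ s
  · simpa only [hi, iff_true] using measurableSet_le measurable_const (by fun_prop)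
  · simpa only [hi, iff_false, not_le] using measurableSet_lt (by fun_prop) measurable_const

lemma norm_le_norm_add_of_mem_orthant {s : Finset (Fin N)} {x y : EuclideanSpace ℝ (Fin N)}
    (hx : x ∈ orthant s) (hy : y ∈ orthant s) : ‖x‖ ≤ ‖x + y‖ := by
  have hinner : 0 ≤ ⟪x, y⟫ := by
    rw [PiLp.inner_apply]
    refine Finset.sum_nonneg fun i _ ↦ ?_
    have hsign : 0 ≤ x i ↔ 0 ≤ y i := (hx i).trans (hy i).symm
    rcases le_or_gt 0 (x i) with h | h
    · exact mul_nonneg (hsign.1 h) h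
    · exact mul_nonneg_of_nonpos_of_nonpos (not_le.1 (mt hsign.2 h.not_ge)).le h.le
  rw [← pow_le_pow_iff_left₀ (norm_nonneg _) (norm_nonneg _) two_ne_zero, norm_add_sq_real]
  nlinarith [sq_nonneg ‖y‖]

end Orthant

section ConvolutionSquare

open scoped Convolution

variable {n : ℕ} {a : ℝ} {s : Finset (Fin (n + 1))} {g u : EuclideanSpace ℝ (Fin (n + 1)) → ℂ}

lemma setLIntegral_unitShell_weight_mul_le (hn : 2 ≤ n) (ha : 0 < a)
    {ξ : EuclideanSpace ℝ (Fin (n + 1))} (hξ : 1 / (4 * π) ≤ ‖ξ‖) :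
    ∫⁻ η in unitShell _, ENNReal.ofReal (a ^ 2 * cauchyKernel a (shellSymbol η)) *
        ENNReal.ofReal (a ^ 2 * cauchyKernel a (shellSymbol (ξ - η))) ≤
      ENNReal.ofReal (4 * π * sphereArea n * a ^ 2) := by
  have hξ0 : 0 < ‖ξ‖ := lt_of_lt_of_le (by positivity) hξ
  have hA := sphereArea_nonneg n
  have hfactor (η : EuclideanSpace ℝ (Fin (n + 1))) :
      ENNReal.ofReal (a ^ 2 * cauchyKernel a (shellSymbol η)) *
          ENNReal.ofReal (a ^ 2 * cauchyKernel a (shellSymbol (ξ - η))) =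
        ENNReal.ofReal (a ^ 4) * ENNReal.ofReal
          (cauchyKernel a (shellSymbol η) * cauchyKernel a (shellSymbol (ξ - η))) := by
    have := cauchyKernel.nonneg a (shellSymbol η)
    rw [← ENNReal.ofReal_mul (by positivity), ← ENNReal.ofReal_mul (by positivity)]
    congr 1
    ring
  simp_rw [hfactor]
  rw [lintegral_const_mul' _ _ ENNReal.ofReal_ne_top]
  refine (mul_le_mul_right (setLIntegral_unitShell_cauchyKernel_mul_le hn ha
    (norm_pos_iff.1 hξ0)) _).trans ?_
  rw [← ENNReal.ofReal_mul (by positivity)]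
  refine ENNReal.ofReal_le_ofReal ?_
  rw [div_le_iff₀ (by positivity)] at hξ
  calc a ^ 4 * (sphereArea n / (‖ξ‖ * a ^ 2)) = 1 * (sphereArea n * a ^ 2 / ‖ξ‖) := by field_simp
    _ ≤ ‖ξ‖ * (4 * π) * (sphereArea n * a ^ 2 / ‖ξ‖) := by gcongr
    _ = 4 * π * sphereArea n * a ^ 2 := by field_simp

lemma enorm_convolution_self_le (ξ : EuclideanSpace ℝ (Fin (n + 1))) :
    ‖(g ⋆[ContinuousLinearMap.mul ℂ ℂ] g) ξ‖ₑ ≤ ∫⁻ η, ‖g η‖ₑ * ‖g (ξ - η)‖ₑ :=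
  (enorm_integral_le_lintegral_enorm _).trans_eq <| by simp [enorm_mul]

lemma convolution_self_eq_zero_of_norm_lt (hsupp : g.support ⊆ unitShell _ ∩ orthant s)
    {ξ : EuclideanSpace ℝ (Fin (n + 1))} (hξ : ‖ξ‖ < 1 / (4 * π)) :
    (g ⋆[ContinuousLinearMap.mul ℂ ℂ] g) ξ = 0 := by
  have hprod (η : EuclideanSpace ℝ (Fin (n + 1))) : g η * g (ξ - η) = 0 := by
    by_contra hne
    obtain ⟨hη, hs⟩ := hsupp (left_ne_zero_of_mul hne)
    have hle := norm_le_norm_add_of_mem_orthant hs (hsupp (right_ne_zero_of_mul hne)).2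
    rw [add_sub_cancel] at hle
    have hlt : ‖η‖ * (4 * π) < 1 := (lt_div_iff₀ (by positivity)).1 (hle.trans_lt hξ)
    have hsq : (‖η‖ * (4 * π)) ^ 2 < 1 := (sq_lt_one_iff₀ (by positivity)).2 hlt
    nlinarith [half_lt_of_mem_unitShell hη]
  simp [convolution_def, hprod]

lemma sq_enorm_convolution_self_le (hn : 2 ≤ n) (ha : 0 < a) (hg : Measurable g)
    (hsupp : g.support ⊆ unitShell _ ∩ orthant s) (ξ : EuclideanSpace ℝ (Fin (n + 1))) :
    ‖(g ⋆[ContinuousLinearMap.mul ℂ ℂ] g) ξ‖ₑ ^ 2 ≤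
      ENNReal.ofReal (4 * π * sphereArea n * a ^ 2) *
        ∫⁻ η, ENNReal.ofReal (1 + (shellSymbol η / a) ^ 2) * ‖g η‖ₑ ^ 2 *
          (ENNReal.ofReal (1 + (shellSymbol (ξ - η) / a) ^ 2) * ‖g (ξ - η)‖ₑ ^ 2) := by
  rcases lt_or_ge ‖ξ‖ (1 / (4 * π)) with hξ | hξ
  · simp [convolution_self_eq_zero_of_norm_lt hsupp hξ]
  have hsub : (fun η ↦ ‖g η‖ₑ * ‖g (ξ - η)‖ₑ).support ⊆ unitShell _ := fun η hη ↦
    (hsupp (show g η ≠ 0 from enorm_ne_zero.1 (left_ne_zero_of_mul hη))).1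
  calc _ ≤ (∫⁻ η in unitShell _, ‖g η‖ₑ * ‖g (ξ - η)‖ₑ) ^ 2 := by
        rw [setLIntegral_eq_of_support_subset hsub]
        exact pow_le_pow_left₀ zero_le (enorm_convolution_self_le ξ) 2
    _ ≤ _ := sq_lintegral_le_lintegral_mul_lintegral
        (k := fun η ↦ ENNReal.ofReal (a ^ 2 * cauchyKernel a (shellSymbol η)) *
          ENNReal.ofReal (a ^ 2 * cauchyKernel a (shellSymbol (ξ - η))))
        (w := fun η ↦ ENNReal.ofReal (1 + (shellSymbol η / a) ^ 2) *
          ENNReal.ofReal (1 + (shellSymbol (ξ - η) / a) ^ 2))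
        (by fun_prop) (by fun_prop) (by fun_prop) fun η ↦ by
          rw [mul_mul_mul_comm, ofReal_sq_mul_cauchyKernel_mul ha,
            ofReal_sq_mul_cauchyKernel_mul ha, one_mul]
    _ ≤ _ := by
        refine mul_le_mul' (setLIntegral_unitShell_weight_mul_le hn ha hξ)
          ((setLIntegral_le_lintegral _ _).trans_eq (lintegral_congr fun η ↦ ?_))
        rw [mul_pow, mul_mul_mul_comm]

lemma lintegral_sq_enorm_convolution_self_le (hn : 2 ≤ n) (ha : 0 < a) (hg : Measurable g)
    (hsupp : g.support ⊆ unitShell _ ∩ orthant s) :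
    ∫⁻ ξ, ‖(g ⋆[ContinuousLinearMap.mul ℂ ℂ] g) ξ‖ₑ ^ 2 ≤
      ENNReal.ofReal (4 * π * sphereArea n * a ^ 2) * shellEnergy a g ^ 2 := by
  refine (lintegral_mono (sq_enorm_convolution_self_le hn ha hg hsupp)).trans_eq ?_
  rw [lintegral_const_mul' _ _ ENNReal.ofReal_ne_top,
    lintegral_lintegral_mul_sub volume
      (f := fun η ↦ ENNReal.ofReal (1 + (shellSymbol η / a) ^ 2) * ‖g η‖ₑ ^ 2)
      (g := fun η ↦ ENNReal.ofReal (1 + (shellSymbol η / a) ^ 2) * ‖g η‖ₑ ^ 2)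
      (by fun_prop) (by fun_prop), ← sq, shellEnergy]

lemma IsL2Fourier.lintegral_enorm_pow_four_le (h : IsL2Fourier g u) (hn : 2 ≤ n) (ha : 0 < a)
    (hg : Measurable g) (hsupp : g.support ⊆ unitShell _ ∩ orthant s)
    (hfin : shellEnergy a g ≠ ∞) :
    ∫⁻ x, ‖u x‖ₑ ^ 4 ≤ ENNReal.ofReal (4 * π * sphereArea n * a ^ 2) * shellEnergy a g ^ 2 := by
  have hbound := lintegral_sq_enorm_convolution_self_le hn ha hg hsupp
  have hgi : Integrable g := integrable_of_support_subset_unitShell ha hg.aestronglyMeasurable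
    (hsupp.trans Set.inter_subset_left) hfin
  have hconv : Integrable (g ⋆[ContinuousLinearMap.mul ℂ ℂ] g) := hgi.integrable_convolution _ hgi
  have hconv2 : MemLp (g ⋆[ContinuousLinearMap.mul ℂ ℂ] g) 2 := by
    refine ⟨hconv.aestronglyMeasurable, ?_⟩
    rw [eLpNorm_lt_top_iff_lintegral_rpow_enorm_lt_top two_ne_zero ENNReal.ofNat_ne_top]
    simpa using hbound.trans_lt (ENNReal.mul_lt_top ENNReal.ofReal_lt_top
      (ENNReal.pow_lt_top hfin.lt_top))
  obtain ⟨v, hv⟩ := IsL2Fourier.exists_right hconv2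
  calc ∫⁻ x, ‖u x‖ₑ ^ 4 = ∫⁻ x, ‖v x‖ₑ ^ 2 := by
        refine lintegral_congr_ae ?_
        filter_upwards [h.ae_eq_fourier_of_integrable hgi,
          hv.ae_eq_fourier_of_integrable hconv] with x hu hv
        rw [hv, Real.fourier_mul_convolution_eq hgi hgi, hu, enorm_mul]
        ring
    _ ≤ _ := hv.lintegral_enorm_sq_eq.trans_le hbound

end ConvolutionSquare

/-! ### The subcritical Sobolev inequality -/

section Sobolev

variable {E : Type*} [NormedAddCommGroup E] [InnerProductSpace ℝ E] [FiniteDimensional ℝ E]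
  [MeasurableSpace E] [BorelSpace E] {g u : E → ℂ} {σ : ℝ}

lemma IsL2Fourier.exists_add_indicator (h : IsL2Fourier g u) {s : Set E} (hs : MeasurableSet s) :
    ∃ v w, IsL2Fourier (s.indicator g) v ∧ IsL2Fourier (sᶜ.indicator g) w ∧
      u =ᵐ[volume] v + w := by
  obtain ⟨v, hv⟩ := IsL2Fourier.exists_right (h.memLp_left.indicator hs)
  obtain ⟨w, hw⟩ := IsL2Fourier.exists_right (h.memLp_left.indicator hs.compl)
  refine ⟨v, w, hv, hw, h.unique ?_⟩
  simpa only [Set.indicator_self_add_compl] using hv.add hw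

lemma IsL2Fourier.measure_two_mul_lt_norm_le (h : IsL2Fourier g u) {s : Set E}
    (hs : MeasurableSet s) {t : ℝ} (ht : 0 < t) (hlow : ∫⁻ ξ in s, ‖g ξ‖ₑ ≤ ENNReal.ofReal t) :
    volume {x | 2 * t < ‖u x‖} ≤ ENNReal.ofReal (t ^ 2)⁻¹ * ∫⁻ ξ in sᶜ, ‖g ξ‖ₑ ^ 2 := by
  obtain ⟨v, w, hv, hw, huvw⟩ := h.exists_add_indicator hs
  have hnorm : ∫⁻ ξ, ‖s.indicator g ξ‖ₑ = ∫⁻ ξ in s, ‖g ξ‖ₑ := by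
    simp_rw [enorm_indicator_eq_indicator_enorm]
    exact lintegral_indicator hs _
  have hint : Integrable (s.indicator g) :=
    ⟨h.memLp_left.aestronglyMeasurable.indicator hs,
      (hnorm.trans_le hlow).trans_lt ENNReal.ofReal_lt_top⟩
  have hmass : ∫⁻ x, ‖w x‖ₑ ^ 2 = ∫⁻ ξ in sᶜ, ‖g ξ‖ₑ ^ 2 := by
    rw [hw.lintegral_enorm_sq_eq, ← lintegral_indicator hs.compl]
    refine lintegral_congr fun ξ ↦ ?_
    by_cases hξ : ξ ∈ s <;> simp [hξ]
  have hsubset : {x | 2 * t < ‖u x‖} ≤ᵐ[volume] {x | ENNReal.ofReal (t ^ 2) ≤ ‖w x‖ₑ ^ 2} := by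
    filter_upwards [huvw, hv.ae_enorm_le_lintegral hint] with x hux hvx (hlt : 2 * t < ‖u x‖)
    have hvt : ‖v x‖ ≤ t := by
      rw [← ENNReal.ofReal_le_ofReal_iff ht.le, ofReal_norm]
      exact (hvx.trans_eq hnorm).trans hlow
    have hwt : t ≤ ‖w x‖ := by
      rw [hux, Pi.add_apply] at hlt
      linarith [norm_add_le (v x) (w x)]
    change ENNReal.ofReal (t ^ 2) ≤ ‖w x‖ₑ ^ 2
    rw [← ofReal_norm, ← ENNReal.ofReal_pow (norm_nonneg _)]
    gcongr
  rw [← hmass, ENNReal.ofReal_inv_of_pos (by positivity),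
    mul_comm (ENNReal.ofReal _)⁻¹, ← div_eq_mul_inv]
  exact (measure_mono_ae hsubset).trans (meas_ge_le_lintegral_div
    (hw.memLp_right.aestronglyMeasurable.enorm.pow_const 2) (by simpa using ht.ne') (by simp))

/- The splitting of Chemin and Xu: at each level `t` of the layer-cake formula the frequencies are
cut at `Λ = t`, so that the low ones contribute at most `t` to `|u|`. -/
lemma IsL2Fourier.lintegral_rpow_le_of_setLIntegral_le (h : IsL2Fourier g u) (hσ : 0 < σ)
    {Λ : E → ℝ} (hΛ0 : 0 ≤ Λ) (hΛm : Measurable Λ)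
    (hΛ : ∀ t > 0, ∫⁻ ξ in {ξ | Λ ξ < t}, ‖g ξ‖ₑ ≤ ENNReal.ofReal t) :
    ∫⁻ x, ‖u x‖ₑ ^ (2 * σ + 2) ≤ ENNReal.ofReal (2 ^ (2 * σ + 2) * (σ + 1) / σ) *
      ∫⁻ ξ, ENNReal.ofReal (Λ ξ ^ (2 * σ)) * ‖g ξ‖ₑ ^ 2 := by
  have hgm : AEMeasurable (fun ξ ↦ ‖g ξ‖ₑ ^ 2) :=
    h.memLp_left.aestronglyMeasurable.enorm.pow_const 2
  have hum := h.memLp_right.aestronglyMeasurable.norm.aemeasurable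
  set ν : Measure E := volume.withDensity fun ξ ↦ ‖g ξ‖ₑ ^ 2
  have hleft (x : E) : ‖u x‖ₑ ^ (2 * σ + 2) =
      ENNReal.ofReal (2 ^ (2 * σ + 2)) * ENNReal.ofReal ((‖u x‖ / 2) ^ (2 * σ + 2)) := by
    rw [← ENNReal.ofReal_mul (by positivity), ← Real.mul_rpow (by norm_num) (by positivity),
      mul_div_cancel₀ _ two_ne_zero, ← ENNReal.ofReal_rpow_of_nonneg (norm_nonneg _) (by linarith),
      ofReal_norm]
  have hright : ∫⁻ ξ, ENNReal.ofReal (Λ ξ ^ (2 * σ)) * ‖g ξ‖ₑ ^ 2 =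
      ENNReal.ofReal (2 * σ) *
        ∫⁻ t in Set.Ioi 0, ν {ξ | t ≤ Λ ξ} * ENNReal.ofReal (t ^ (2 * σ - 1)) := by
    rw [← lintegral_rpow_eq_lintegral_meas_le_mul ν (.of_forall hΛ0) hΛm.aemeasurable
      (by positivity), lintegral_withDensity_eq_lintegral_mul₀ hgm (by fun_prop)]
    simp only [Pi.mul_apply, mul_comm]
  have hlevel {t : ℝ} (ht : 0 < t) :
      volume {x | t < ‖u x‖ / 2} ≤ ENNReal.ofReal (t ^ 2)⁻¹ * ν {ξ | t ≤ Λ ξ} := by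
    have hset : {ξ | Λ ξ < t}ᶜ = {ξ | t ≤ Λ ξ} := by ext; simp
    rw [withDensity_apply _ (measurableSet_le measurable_const hΛm), ← hset]
    simpa only [lt_div_iff₀' (two_pos (α := ℝ))] using h.measure_two_mul_lt_norm_le
      (measurableSet_lt hΛm measurable_const) ht (hΛ t ht)
  simp_rw [hleft]
  rw [lintegral_const_mul' _ _ ENNReal.ofReal_ne_top, lintegral_rpow_eq_lintegral_meas_lt_mul
    volume (.of_forall fun _ ↦ by positivity) (hum.div_const 2) (by positivity), hright,
    ← mul_assoc, ← mul_assoc, ← ENNReal.ofReal_mul (by positivity),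
    ← ENNReal.ofReal_mul (by positivity)]
  refine mul_le_mul' (le_of_eq (by congr 1; field_simp)) ?_
  refine setLIntegral_mono' measurableSet_Ioi fun t ht ↦
    (mul_le_mul_left (hlevel ht) _).trans_eq ?_
  rw [mul_comm (ENNReal.ofReal _), mul_assoc, ← ENNReal.ofReal_mul (by positivity),
    ← Real.rpow_natCast, ← Real.rpow_neg ht.le, ← Real.rpow_add ht]
  congr 3
  push_cast
  ring

lemma setLIntegral_inv_one_add_norm_sq_sq_le (σ : ℝ) {b t : ℝ} (hb : 0 < b) :
    ∫⁻ ξ in {ξ : E | b * (1 + ‖ξ‖ ^ 2) ^ σ⁻¹ < t}, ENNReal.ofReal ((1 + ‖ξ‖ ^ 2) ^ 2)⁻¹ ≤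
      ENNReal.ofReal ((t / b) ^ 2) *
        ∫⁻ ξ : E, ENNReal.ofReal ((1 + ‖ξ‖ ^ 2) ^ (-(4 + 4 / σ) / 2)) := by
  rw [← lintegral_const_mul' _ _ ENNReal.ofReal_ne_top]
  refine (setLIntegral_mono' (measurableSet_lt (by fun_prop) measurable_const)
    fun ξ hξ ↦ ?_).trans (setLIntegral_le_lintegral _ _)
  have hpos : 0 < 1 + ‖ξ‖ ^ 2 := by positivity
  have hexp : (1 + ‖ξ‖ ^ 2) ^ (-(4 + 4 / σ) / 2) =
      ((1 + ‖ξ‖ ^ 2) ^ 2)⁻¹ * (((1 + ‖ξ‖ ^ 2) ^ σ⁻¹) ^ 2)⁻¹ := by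
    rw [← Real.rpow_mul_natCast hpos.le, ← Real.rpow_natCast (1 + ‖ξ‖ ^ 2) 2,
      ← Real.rpow_neg hpos.le, ← Real.rpow_neg hpos.le, ← Real.rpow_add hpos]
    congr 1
    push_cast
    ring
  rw [← ENNReal.ofReal_mul (by positivity), hexp, mul_left_comm, ← div_eq_mul_inv ((t / b) ^ 2)]
  refine ENNReal.ofReal_le_ofReal (le_mul_of_one_le_right (by positivity) ?_)
  rw [one_le_div (by positivity)]
  gcongr
  rw [le_div_iff₀' hb]
  exact hξ.le

lemma sq_setLIntegral_enorm_le_of_mul_rpow_lt {C H t : ℝ} (hg : AEMeasurable g) (hC : 0 < C)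
    (hH : 0 < H)
    (hCint : ∫⁻ ξ : E, ENNReal.ofReal ((1 + ‖ξ‖ ^ 2) ^ (-(4 + 4 / σ) / 2)) ≤ ENNReal.ofReal C)
    (hgH : ∫⁻ ξ, ENNReal.ofReal ((1 + ‖ξ‖ ^ 2) ^ 2) * ‖g ξ‖ₑ ^ 2 ≤ ENNReal.ofReal H) :
    (∫⁻ ξ in {ξ | √(C * H) * (1 + ‖ξ‖ ^ 2) ^ σ⁻¹ < t}, ‖g ξ‖ₑ) ^ 2 ≤ ENNReal.ofReal (t ^ 2) := by
  have hCH : 0 < C * H := mul_pos hC hH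
  refine (sq_lintegral_le_lintegral_mul_lintegral hg.enorm.restrict (by fun_prop)
    (w := fun ξ ↦ ENNReal.ofReal ((1 + ‖ξ‖ ^ 2) ^ 2)) (by fun_prop) fun ξ ↦ ?_).trans
    ((mul_le_mul' ((setLIntegral_inv_one_add_norm_sq_sq_le σ (Real.sqrt_pos.2 hCH)).trans
      (mul_le_mul_right hCint _)) ((setLIntegral_le_lintegral _ _).trans hgH)).trans_eq ?_)
  · rw [← ENNReal.ofReal_mul (by positivity), inv_mul_cancel₀ (by positivity), ENNReal.ofReal_one]
  · rw [← ENNReal.ofReal_mul (by positivity), ← ENNReal.ofReal_mul (by positivity), div_pow,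
      Real.sq_sqrt hCH.le, mul_assoc, div_mul_cancel₀ _ hCH.ne']

lemma exists_lintegral_rpow_le_of_finrank_mul_lt (hσ : 0 < σ)
    (hsub : Module.finrank ℝ E * σ < 4 * σ + 4) :
    ∃ K > 0, ∀ (g u : E → ℂ) (H : ℝ), IsL2Fourier g u → 0 < H →
      ∫⁻ ξ, ENNReal.ofReal ((1 + ‖ξ‖ ^ 2) ^ 2) * ‖g ξ‖ₑ ^ 2 ≤ ENNReal.ofReal H →
      ∫⁻ x, ‖u x‖ₑ ^ (2 * σ + 2) ≤ ENNReal.ofReal (K * H ^ (σ + 1)) := by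
  have hint : Integrable fun ξ : E ↦ (1 + ‖ξ‖ ^ 2) ^ (-(4 + 4 / σ) / 2) :=
    integrable_rpow_neg_one_add_norm_sq (by rw [← mul_lt_mul_iff_left₀ hσ]; field_simp; linarith)
  set C := (∫ ξ : E, (1 + ‖ξ‖ ^ 2) ^ (-(4 + 4 / σ) / 2)) + 1
  have hC : 0 < C := add_pos_of_nonneg_of_pos (integral_nonneg fun ξ ↦ by positivity) one_pos
  have hCint : ∫⁻ ξ : E, ENNReal.ofReal ((1 + ‖ξ‖ ^ 2) ^ (-(4 + 4 / σ) / 2)) ≤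
      ENNReal.ofReal C := by
    rw [← ofReal_integral_eq_lintegral_ofReal hint (.of_forall fun ξ ↦ by positivity)]
    exact ENNReal.ofReal_le_ofReal (le_add_of_nonneg_right zero_le_one)
  refine ⟨2 ^ (2 * σ + 2) * (σ + 1) / σ * C ^ σ, by positivity, fun g u H h hH hgH ↦ ?_⟩
  have hΛ (ξ : E) : (√(C * H) * (1 + ‖ξ‖ ^ 2) ^ σ⁻¹) ^ (2 * σ) =
      (C * H) ^ σ * (1 + ‖ξ‖ ^ 2) ^ 2 := by
    rw [Real.mul_rpow (by positivity) (by positivity), Real.rpow_mul (by positivity), Real.rpow_two,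
      Real.sq_sqrt (by positivity), ← Real.rpow_mul (by positivity),
      show σ⁻¹ * (2 * σ) = 2 by field_simp, Real.rpow_two]
  refine (h.lintegral_rpow_le_of_setLIntegral_le hσ
    (Λ := fun ξ ↦ √(C * H) * (1 + ‖ξ‖ ^ 2) ^ σ⁻¹) (fun ξ ↦ by positivity) (by fun_prop)
    fun t ht ↦ ?_).trans ?_
  · have hsq := sq_setLIntegral_enorm_le_of_mul_rpow_lt (t := t)
      h.memLp_left.aestronglyMeasurable.aemeasurable hC hH hCint hgH
    rwa [ENNReal.ofReal_pow ht.le, ENNReal.pow_le_pow_left_iff two_ne_zero] at hsq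
  · simp_rw [hΛ, ENNReal.ofReal_mul (Real.rpow_nonneg (mul_pos hC hH).le σ), mul_assoc]
    rw [lintegral_const_mul' _ _ ENNReal.ofReal_ne_top]
    refine (mul_le_mul_right (mul_le_mul_right hgH _) _).trans_eq ?_
    rw [← ENNReal.ofReal_mul (by positivity), ← ENNReal.ofReal_mul (by positivity),
      Real.mul_rpow hC.le hH.le, Real.rpow_add hH, Real.rpow_one]
    congr 1
    ring

end Sobolev

/-! ### Control of the nonlinear term by the shell energy -/

section FrequencyPieces

variable {E : Type*} [NormedAddCommGroup E] [InnerProductSpace ℝ E] [FiniteDimensional ℝ E]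
  [MeasurableSpace E] [BorelSpace E] {g u : E → ℂ} {a A M σ : ℝ}

lemma IsL2Fourier.lintegral_rpow_le_of_shellEnergy_le [Nontrivial E] (h : IsL2Fourier g u)
    (ha : 0 < a) (hsupp : g.support ⊆ unitShell E) (hM : 0 < M)
    (hgM : shellEnergy a g ≤ ENNReal.ofReal M)
    {s r : ℝ} (hs : 0 ≤ s) (hr : 0 ≤ r) :
    ∫⁻ x, ‖u x‖ₑ ^ (2 * s + r) ≤
      ENNReal.ofReal (((volume : Measure E).toSphere.real Set.univ * a * M) ^ s) *
        ∫⁻ x, ‖u x‖ₑ ^ r := by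
  have hbound := h.ae_enorm_sq_le_shellEnergy ha hsupp (ne_top_of_le_ne_top (by simp) hgM)
  rw [← ENNReal.ofReal_rpow_of_nonneg (by positivity) hs, ENNReal.ofReal_mul (by positivity)]
  refine lintegral_rpow_le_of_ae_sq_le h.memLp_right.aestronglyMeasurable.enorm ?_ hs hr
  exact hbound.mono fun x hx ↦ hx.trans (mul_le_mul_right hgM _)

lemma exists_lintegral_rpow_le_of_support_subset_unitShell [Nontrivial E] (hσ : 2 ≤ σ)
    (hA : 0 < A) :
    ∃ K ≥ 0, ∀ a M : ℝ, 0 < a → a ≤ A → 0 < M → ∀ g u : E → ℂ, IsL2Fourier g u →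
      g.support ⊆ unitShell E → shellEnergy a g ≤ ENNReal.ofReal M →
      ∫⁻ x, ‖u x‖ₑ ^ (2 * σ + 2) ≤ ENNReal.ofReal (K * (a ^ 2 * M ^ (σ + 1))) := by
  set c := (volume : Measure E).toSphere.real Set.univ
  refine ⟨c ^ σ * A ^ (σ - 2), by positivity, fun a M ha haA hM g u h hsupp hgM ↦ ?_⟩
  have hmass : ∫⁻ x, ‖u x‖ₑ ^ (2 : ℝ) ≤ ENNReal.ofReal M := by
    simp only [ENNReal.rpow_two]
    exact (h.lintegral_enorm_sq_eq.trans_le lintegral_enorm_sq_le_shellEnergy).trans hgM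
  refine ((h.lintegral_rpow_le_of_shellEnergy_le ha hsupp hM hgM (by linarith) zero_le_two).trans
    (mul_le_mul_right hmass _)).trans ?_
  rw [← ENNReal.ofReal_mul (by positivity)]
  refine ENNReal.ofReal_le_ofReal ?_
  have haσ : a ^ σ ≤ A ^ (σ - 2) * a ^ 2 := by
    rw [← sub_add_cancel σ 2, Real.rpow_add ha, Real.rpow_two, add_sub_cancel_right]
    gcongr
  calc (c * a * M) ^ σ * M = c ^ σ * a ^ σ * M ^ (σ + 1) := by
        rw [Real.mul_rpow (by positivity) hM.le, Real.mul_rpow (by positivity) ha.le,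
          Real.rpow_add hM, Real.rpow_one]
        ring
    _ ≤ c ^ σ * (A ^ (σ - 2) * a ^ 2) * M ^ (σ + 1) := by gcongr
    _ = _ := by ring

lemma exists_lintegral_rpow_le_of_support_subset_unitShell_inter_orthant_of_two_le {n : ℕ}
    (hn : 2 ≤ n) (hσ : 1 ≤ σ) (hA : 0 < A) :
    ∃ K ≥ 0, ∀ a M : ℝ, 0 < a → a ≤ A → 0 < M → ∀ (g u : EuclideanSpace ℝ (Fin (n + 1)) → ℂ)
      (s : Finset (Fin (n + 1))), Measurable g → IsL2Fourier g u →
      g.support ⊆ unitShell _ ∩ orthant s → shellEnergy a g ≤ ENNReal.ofReal M →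
      ∫⁻ x, ‖u x‖ₑ ^ (2 * σ + 2) ≤ ENNReal.ofReal (K * (a ^ 2 * M ^ (σ + 1))) := by
  set c := (volume : Measure (EuclideanSpace ℝ (Fin (n + 1)))).toSphere.real Set.univ
  have hω := sphereArea_nonneg n
  refine ⟨c ^ (σ - 1) * A ^ (σ - 1) * (4 * π * sphereArea n), by positivity,
    fun a M ha haA hM g u s hg h hsupp hgM ↦ ?_⟩
  have hfour : ∫⁻ x, ‖u x‖ₑ ^ (4 : ℝ) ≤ ENNReal.ofReal (4 * π * sphereArea n * a ^ 2 * M ^ 2) := by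
    rw [ENNReal.ofReal_mul (by positivity), ENNReal.ofReal_pow hM.le]
    simp only [ENNReal.rpow_ofNat]
    refine (h.lintegral_enorm_pow_four_le hn ha hg hsupp
      (ne_top_of_le_ne_top (by simp) hgM)).trans ?_
    gcongr
  rw [show 2 * σ + 2 = 2 * (σ - 1) + 4 by ring]
  refine ((h.lintegral_rpow_le_of_shellEnergy_le ha (hsupp.trans Set.inter_subset_left) hM hgM
    (sub_nonneg.2 hσ) zero_le_four).trans (mul_le_mul_right hfour _)).trans ?_
  rw [← ENNReal.ofReal_mul (by positivity)]
  refine ENNReal.ofReal_le_ofReal ?_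
  calc (c * a * M) ^ (σ - 1) * (4 * π * sphereArea n * a ^ 2 * M ^ 2)
      = c ^ (σ - 1) * a ^ (σ - 1) * (4 * π * sphereArea n) * (a ^ 2 * M ^ (σ + 1)) := by
        rw [Real.mul_rpow (by positivity) hM.le, Real.mul_rpow (by positivity) ha.le,
          show σ + 1 = σ - 1 + 2 by ring, Real.rpow_add hM, Real.rpow_two]
        ring
    _ ≤ _ := by
        gcongr

lemma exists_lintegral_rpow_le_of_support_subset_unitShell_inter_orthant {N : ℕ}
    (hσ : 1 ≤ σ) (hNσ : 4 < N * σ) (hA : 0 < A) :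
    ∃ K ≥ 0, ∀ a M : ℝ, 0 < a → a ≤ A → 0 < M → ∀ (g u : EuclideanSpace ℝ (Fin N) → ℂ)
      (s : Finset (Fin N)), Measurable g → IsL2Fourier g u →
      g.support ⊆ unitShell _ ∩ orthant s → shellEnergy a g ≤ ENNReal.ofReal M →
      ∫⁻ x, ‖u x‖ₑ ^ (2 * σ + 2) ≤ ENNReal.ofReal (K * (a ^ 2 * M ^ (σ + 1))) := by
  rcases N with _ | n
  · norm_num at hNσ
  rcases lt_or_ge n 2 with hn | hn
  · have hn1 : (n : ℝ) ≤ 1 := by exact_mod_cast Nat.le_of_lt_succ hn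
    have hσ2 : 2 ≤ σ := by
      push_cast at hNσ
      nlinarith
    obtain ⟨K, hK, hbound⟩ := exists_lintegral_rpow_le_of_support_subset_unitShell
      (E := EuclideanSpace ℝ (Fin (n + 1))) hσ2 hA
    exact ⟨K, hK, fun a M ha haA hM g u s _ h hsupp ↦
      hbound a M ha haA hM g u h (hsupp.trans Set.inter_subset_left)⟩
  · exact exists_lintegral_rpow_le_of_support_subset_unitShell_inter_orthant_of_two_le hn hσ hA

lemma lintegral_one_add_norm_sq_sq_mul_indicator_le (ha : 0 < a) (g : E → ℂ) :
    ∫⁻ ξ, ENNReal.ofReal ((1 + ‖ξ‖ ^ 2) ^ 2) * ‖(unitShell E)ᶜ.indicator g ξ‖ₑ ^ 2 ≤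
      ENNReal.ofReal (25 * a ^ 2) * shellEnergy a g := by
  rw [shellEnergy, ← lintegral_const_mul' _ _ ENNReal.ofReal_ne_top]
  refine lintegral_mono fun ξ ↦ ?_
  by_cases hξ : ξ ∈ unitShell E
  · simp [hξ]
  · rw [Set.indicator_of_mem (Set.mem_compl hξ), ← mul_assoc, ← ENNReal.ofReal_mul (by positivity)]
    gcongr
    refine (one_add_norm_sq_sq_le_of_notMem_unitShell hξ).trans ?_
    rw [mul_assoc, mul_add, div_pow, mul_div_cancel₀ _ (by positivity)]
    gcongr
    exact le_add_of_nonneg_left (by positivity)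

lemma exists_lintegral_rpow_le_of_support_disjoint_unitShell (hσ : 0 < σ)
    (hsub : Module.finrank ℝ E * σ < 4 * σ + 4) (hA : 0 < A) :
    ∃ K ≥ 0, ∀ a M : ℝ, 0 < a → a ≤ A → 0 < M → ∀ g u : E → ℂ,
      IsL2Fourier ((unitShell E)ᶜ.indicator g) u → shellEnergy a g ≤ ENNReal.ofReal M →
      ∫⁻ x, ‖u x‖ₑ ^ (2 * σ + 2) ≤ ENNReal.ofReal (K * (a ^ 2 * M ^ (σ + 1))) := by
  obtain ⟨K, hK, hbound⟩ := exists_lintegral_rpow_le_of_finrank_mul_lt (E := E) hσ hsub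
  refine ⟨K * 25 ^ (σ + 1) * (A ^ 2) ^ σ, by positivity, fun a M ha haA hM g u h hgM ↦ ?_⟩
  refine (hbound _ u (25 * a ^ 2 * M) h (by positivity) ?_).trans (ENNReal.ofReal_le_ofReal ?_)
  · rw [ENNReal.ofReal_mul (by positivity)]
    exact (lintegral_one_add_norm_sq_sq_mul_indicator_le ha g).trans (mul_le_mul_right hgM _)
  · calc K * (25 * a ^ 2 * M) ^ (σ + 1)
        = K * 25 ^ (σ + 1) * (a ^ 2) ^ σ * (a ^ 2 * M ^ (σ + 1)) := by
          rw [Real.mul_rpow (by positivity) hM.le, Real.mul_rpow (by norm_num) (by positivity),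
            Real.rpow_add (x := a ^ 2) (by positivity), Real.rpow_one]
          ring
      _ ≤ _ := by gcongr

/-- The partition of the frequencies into the complement of the shell (`none`) and the parts of the
shell lying in each orthant. -/
def frequencyPiece (N : ℕ) : Option (Finset (Fin N)) → Set (EuclideanSpace ℝ (Fin N))
  | none => (unitShell _)ᶜ
  | some s => unitShell _ ∩ orthant s

lemma measurableSet_frequencyPiece {N : ℕ} : ∀ i, MeasurableSet (frequencyPiece N i)
  | none => measurableSet_unitShell.compl
  | some s => measurableSet_unitShell.inter (measurableSet_orthant s)

lemma sum_indicator_frequencyPiece {N : ℕ} (g : EuclideanSpace ℝ (Fin N) → ℂ) :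
    ∑ i, (frequencyPiece N i).indicator g = g := by
  ext ξ
  rw [Finset.sum_apply, Fintype.sum_option]
  by_cases hξ : ξ ∈ unitShell _
  · have hmem (s : Finset (Fin N)) :
        ξ ∈ unitShell _ ∩ orthant s ↔ s = Finset.univ.filter (0 ≤ ξ ·) := by
      simp [hξ, orthant, Finset.ext_iff, iff_comm]
    classical
    simp only [frequencyPiece, Set.indicator_apply, hmem]
    simp [hξ]
  · simp [frequencyPiece, hξ]

lemma exists_lintegral_rpow_le_of_frequencyPiece {N : ℕ} (hσ : 1 ≤ σ) (hNσ : 4 < N * σ)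
    (hsub : N * σ < 4 * σ + 4) (hA : 0 < A) :
    ∃ K ≥ 0, ∀ a M : ℝ, 0 < a → a ≤ A → 0 < M → ∀ i (g u : EuclideanSpace ℝ (Fin N) → ℂ),
      Measurable g → IsL2Fourier ((frequencyPiece N i).indicator g) u →
      shellEnergy a g ≤ ENNReal.ofReal M →
      ∫⁻ x, ‖u x‖ₑ ^ (2 * σ + 2) ≤ ENNReal.ofReal (K * (a ^ 2 * M ^ (σ + 1))) := by
  obtain ⟨K₁, hK₁, hout⟩ := exists_lintegral_rpow_le_of_support_disjoint_unitShell
    (E := EuclideanSpace ℝ (Fin N)) (σ := σ) (by linarith) (by simpa using hsub) hA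
  obtain ⟨K₂, _, hin⟩ :=
    exists_lintegral_rpow_le_of_support_subset_unitShell_inter_orthant hσ hNσ hA
  refine ⟨max K₁ K₂, le_max_of_le_left hK₁, fun a M ha haA hM i g u hg h hgM ↦ ?_⟩
  rcases i with _ | s
  · refine (hout a M ha haA hM g u h hgM).trans (ENNReal.ofReal_le_ofReal ?_)
    gcongr
    exact le_max_left _ _
  · refine (hin a M ha haA hM _ u s (hg.indicator (measurableSet_frequencyPiece (some s))) h
      Set.support_indicator_subset ((shellEnergy_indicator_le _).trans hgM)).trans
      (ENNReal.ofReal_le_ofReal ?_)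
    gcongr
    exact le_max_right _ _

lemma lintegral_enorm_sum_rpow_le {α ι : Type*} [MeasurableSpace α] {μ : Measure α} (s : Finset ι)
    {v : ι → α → ℂ} (hv : ∀ i ∈ s, AEStronglyMeasurable (v i) μ) {q : ℝ} (hq : 1 ≤ q) :
    ∫⁻ x, ‖∑ i ∈ s, v i x‖ₑ ^ q ∂μ ≤
      (s.card : ℝ≥0∞) ^ (q - 1) * ∑ i ∈ s, ∫⁻ x, ‖v i x‖ₑ ^ q ∂μ := by
  rw [← lintegral_finsetSum' _ fun i hi ↦ (hv i hi).enorm.pow_const q, ← lintegral_const_mul'' _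
    (Finset.aemeasurable_fun_sum _ fun i hi ↦ (hv i hi).enorm.pow_const q)]
  refine lintegral_mono fun x ↦ ?_
  refine (ENNReal.rpow_le_rpow (enorm_sum_le s _) (zero_le_one.trans hq)).trans ?_
  exact ENNReal.rpow_sum_le_const_mul_sum_rpow s _ hq

lemma exists_lintegral_rpow_le_of_shellEnergy_le {N : ℕ} (hσ : 1 ≤ σ) (hNσ : 4 < N * σ)
    (hsub : N * σ < 4 * σ + 4) (hA : 0 < A) :
    ∃ K ≥ 0, ∀ a M : ℝ, 0 < a → a ≤ A → 0 < M → ∀ g u : EuclideanSpace ℝ (Fin N) → ℂ,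
      IsL2Fourier g u → shellEnergy a g ≤ ENNReal.ofReal M →
      ∫⁻ x, ‖u x‖ₑ ^ (2 * σ + 2) ≤ ENNReal.ofReal (K * (a ^ 2 * M ^ (σ + 1))) := by
  obtain ⟨K, hK, hpiece⟩ := exists_lintegral_rpow_le_of_frequencyPiece hσ hNσ hsub hA
  set k : ℝ := ((Finset.univ : Finset (Option (Finset (Fin N)))).card : ℝ)
  refine ⟨k ^ (2 * σ + 1) * (k * K), by positivity, fun a M ha haA hM g₀ u h₀ hgM₀ ↦ ?_⟩
  obtain ⟨g, hg, hg₀g⟩ := h₀.memLp_left.aestronglyMeasurable.aemeasurable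
  have h : IsL2Fourier g u := h₀.congr hg₀g (ae_eq_refl _)
  have hgM : shellEnergy a g ≤ ENNReal.ofReal M := by
    refine (lintegral_congr_ae (hg₀g.mono fun ξ hξ ↦ ?_)).trans_le hgM₀
    simp only [hξ]
  choose v hv using fun i ↦ IsL2Fourier.exists_right
    (h.memLp_left.indicator (measurableSet_frequencyPiece i))
  have hu : u =ᵐ[volume] ∑ i, v i :=
    h.unique (by simpa only [sum_indicator_frequencyPiece] using IsL2Fourier.sum Finset.univ hv)
  calc ∫⁻ x, ‖u x‖ₑ ^ (2 * σ + 2)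
      = ∫⁻ x, ‖∑ i, v i x‖ₑ ^ (2 * σ + 2) :=
        lintegral_congr_ae (hu.mono fun x hx ↦ by simp only [hx, Finset.sum_apply])
    _ ≤ ENNReal.ofReal (k ^ (2 * σ + 1)) * ∑ i, ∫⁻ x, ‖v i x‖ₑ ^ (2 * σ + 2) := by
        refine (lintegral_enorm_sum_rpow_le _ (fun i _ ↦ (hv i).memLp_right.aestronglyMeasurable)
          (by linarith)).trans_eq ?_
        rw [← ENNReal.ofReal_rpow_of_nonneg (by positivity) (by positivity), ENNReal.ofReal_natCast]
        ring_nf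
    _ ≤ ENNReal.ofReal (k ^ (2 * σ + 1)) * ∑ _i, ENNReal.ofReal (K * (a ^ 2 * M ^ (σ + 1))) := by
        gcongr with i
        exact hpiece a M ha haA hM i g (v i) hg (hv i) hgM
    _ = ENNReal.ofReal (k ^ (2 * σ + 1) * (k * K) * (a ^ 2 * M ^ (σ + 1))) := by
        rw [Finset.sum_const, nsmul_eq_mul, ← ENNReal.ofReal_natCast, ← ENNReal.ofReal_mul
          (by positivity), ← ENNReal.ofReal_mul (by positivity)]
        congr 1
        ring

end FrequencyPieces

/-! ### Lower bounds for the energy -/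

section EnergyLowerBound

variable {N : ℕ} {σ : ℝ} {U : H2 N}

namespace H2

lemma massSq_eq_integral {g : Esp N → ℂ} (hg : IsL2Fourier g U.u) :
    U.massSq = ∫ ξ, ‖g ξ‖ ^ 2 :=
  hg.integral_norm_sq_eq

lemma lapSq_nonneg (U : H2 N) : 0 ≤ U.lapSq := integral_nonneg fun _ ↦ by positivity

lemma pPow_nonneg (σ : ℝ) (U : H2 N) : 0 ≤ U.pPow σ := integral_nonneg fun _ ↦ by positivity

lemma integrable_mul_norm_fourier_sq {g : Esp N → ℂ} (hg : IsL2Fourier g U.u) :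
    Integrable fun ξ ↦ 4 * π ^ 2 * ‖ξ‖ ^ 2 * ‖g ξ‖ ^ 2 := by
  have hmass := hg.memLp_left.integrable_norm_pow two_ne_zero
  refine (hmass.add (integrable_sq_mul_norm_fourier_sq hg)).mono'
    ((by fun_prop : AEStronglyMeasurable fun ξ : Esp N ↦ 4 * π ^ 2 * ‖ξ‖ ^ 2).mul
      hmass.aestronglyMeasurable) (ae_of_all _ fun ξ ↦ ?_)
  rw [Real.norm_of_nonneg (by positivity), Pi.add_apply, ← one_add_mul]
  gcongr
  nlinarith [sq_nonneg (4 * π ^ 2 * ‖ξ‖ ^ 2 - 1)]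

lemma integral_eq_lapSq_sub_add {g : Esp N → ℂ} (hg : IsL2Fourier g U.u) (t : ℝ) :
    Integrable (fun ξ ↦ (4 * π ^ 2 * ‖ξ‖ ^ 2 - t) ^ 2 * ‖g ξ‖ ^ 2) ∧
      ∫ ξ, (4 * π ^ 2 * ‖ξ‖ ^ 2 - t) ^ 2 * ‖g ξ‖ ^ 2 =
        U.lapSq - 2 * t * U.gradSq + t ^ 2 * U.massSq := by
  have hexpand : (fun ξ ↦ (4 * π ^ 2 * ‖ξ‖ ^ 2 - t) ^ 2 * ‖g ξ‖ ^ 2) = fun ξ ↦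
      (4 * π ^ 2 * ‖ξ‖ ^ 2) ^ 2 * ‖g ξ‖ ^ 2 - 2 * t * (4 * π ^ 2 * ‖ξ‖ ^ 2 * ‖g ξ‖ ^ 2) +
        t ^ 2 * ‖g ξ‖ ^ 2 := by
    ext ξ; ring
  have hlap := integrable_sq_mul_norm_fourier_sq hg
  have hgrad := (integrable_mul_norm_fourier_sq hg).const_mul (2 * t)
  have hmass := (hg.memLp_left.integrable_norm_pow two_ne_zero).const_mul (t ^ 2)
  rw [hexpand]
  refine ⟨(hlap.sub' hgrad).add hmass, ?_⟩
  rw [integral_add (hlap.sub' hgrad) hmass, integral_sub hlap hgrad, integral_const_mul,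
    integral_const_mul, ← lapSq_eq_integral hg, ← gradSq_eq_integral hg, ← massSq_eq_integral hg]

lemma lapSq_sub_mul_gradSq_add_nonneg (U : H2 N) (t : ℝ) :
    0 ≤ U.lapSq - 2 * t * U.gradSq + t ^ 2 * U.massSq := by
  obtain ⟨g, hg⟩ := IsL2Fourier.exists_left U.u_mem
  rw [← (integral_eq_lapSq_sub_add hg t).2]
  exact integral_nonneg fun ξ ↦ by positivity

lemma shellEnergy_eq {g : Esp N → ℂ} (hg : IsL2Fourier g U.u) (a : ℝ) :
    shellEnergy a g =
      ENNReal.ofReal (U.massSq + (U.lapSq - 2 * U.gradSq + U.massSq) / a ^ 2) := by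
  obtain ⟨hint, hquad⟩ := integral_eq_lapSq_sub_add hg 1
  have hmass := hg.memLp_left.integrable_norm_pow two_ne_zero
  have hexpand (ξ : Esp N) : (1 + (shellSymbol ξ / a) ^ 2) * ‖g ξ‖ ^ 2 =
      ‖g ξ‖ ^ 2 + (4 * π ^ 2 * ‖ξ‖ ^ 2 - 1) ^ 2 * ‖g ξ‖ ^ 2 / a ^ 2 := by
    unfold shellSymbol; ring
  have hint' : Integrable fun ξ ↦ (1 + (shellSymbol ξ / a) ^ 2) * ‖g ξ‖ ^ 2 := by
    simpa only [hexpand] using hmass.fun_add (hint.div_const (a ^ 2))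
  simp only [mul_one, one_pow, one_mul] at hquad
  rw [← hquad, massSq_eq_integral hg, ← integral_div, ← integral_add hmass (hint.div_const _)]
  simp only [← hexpand]
  rw [ofReal_integral_eq_lintegral_ofReal hint' (ae_of_all _ fun ξ ↦ by positivity)]
  refine lintegral_congr fun ξ ↦ ?_
  rw [← ofReal_norm, ← ENNReal.ofReal_pow (norm_nonneg _), ← ENNReal.ofReal_mul (by positivity)]

lemma shellEnergy_sqrt_div_le {g : Esp N → ℂ} (hg : IsL2Fourier g U.u) (hm : 0 < U.massSq) {p : ℝ}
    (hp : 0 < p) (h : U.lapSq - 2 * U.gradSq + U.massSq ≤ p) :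
    shellEnergy √(p / U.massSq) g ≤ ENNReal.ofReal (2 * U.massSq) := by
  rw [shellEnergy_eq hg, Real.sq_sqrt (by positivity), div_div_eq_mul_div, two_mul U.massSq]
  refine ENNReal.ofReal_le_ofReal (add_le_add_right ?_ _)
  exact (div_le_iff₀' hp).2 (mul_le_mul_of_nonneg_right h hm.le)

lemma pPow_le_of_lintegral_le (hσ : 0 ≤ σ) {B : ℝ} (hB : 0 ≤ B)
    (h : ∫⁻ x, ‖U.u x‖ₑ ^ (2 * σ + 2) ≤ ENNReal.ofReal B) : U.pPow σ ≤ B := by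
  rw [pPow, integral_eq_lintegral_of_nonneg_ae (ae_of_all _ fun x ↦ by positivity)
    (U.u_mem.aestronglyMeasurable.norm.aemeasurable.pow_const _).aestronglyMeasurable]
  refine ENNReal.toReal_le_of_le_ofReal hB (le_trans (lintegral_mono fun x ↦ ?_) h)
  rw [← ENNReal.ofReal_rpow_of_nonneg (norm_nonneg _) (by linarith), ofReal_norm]

end H2

/-- The constant `κ` for which `D(u) > 0` means `∫|u|^{2σ+2} / (σ+1) < κ ∫|Δu|²`. -/
def lapRatio (N : ℕ) (σ : ℝ) : ℝ := 8 / (N * σ * (N * σ - 2))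

lemma lapRatio_pos (hNσ : 4 < N * σ) : 0 < lapRatio N σ :=
  div_pos (by norm_num) (mul_pos (by linarith) (by linarith))

lemma lapRatio_lt_one (hNσ : 4 < N * σ) : lapRatio N σ < 1 :=
  (div_lt_one (by nlinarith)).2 (by nlinarith)

lemma Dfun_pos_iff (hNσ : 4 < N * σ) :
    0 < Dfun σ U ↔ 1 / (σ + 1) * U.pPow σ < lapRatio N σ * U.lapSq := by
  have hDfun : Dfun σ U = U.lapSq - 1 / (σ + 1) * U.pPow σ / lapRatio N σ := by
    rw [Dfun, lapRatio, div_div_eq_mul_div, ← div_div]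
    ring
  rw [hDfun, sub_pos, div_lt_iff₀' (lapRatio_pos hNσ)]

lemma neg_massSq_div_le_energy (hNσ : 4 < N * σ) (hD : 0 < Dfun σ U) :
    -(U.massSq / (1 - lapRatio N σ)) ≤ U.energy σ := by
  have hp := (Dfun_pos_iff hNσ).1 hD
  have hκ : 0 < 1 - lapRatio N σ := sub_pos.2 (lapRatio_lt_one hNσ)
  have hquad := mul_nonneg hκ.le (U.lapSq_sub_mul_gradSq_add_nonneg (1 / (1 - lapRatio N σ)))
  have hexpand : (1 - lapRatio N σ) * (U.lapSq - 2 * (1 / (1 - lapRatio N σ)) * U.gradSq +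
      (1 / (1 - lapRatio N σ)) ^ 2 * U.massSq) =
      (1 - lapRatio N σ) * U.lapSq - 2 * U.gradSq + U.massSq / (1 - lapRatio N σ) := by
    field_simp
  unfold H2.energy
  linarith

lemma lapSq_le_of_energy_nonpos (hNσ : 4 < N * σ) (hD : 0 < Dfun σ U) (hE : U.energy σ ≤ 0) :
    U.lapSq ≤ (2 / (1 - lapRatio N σ)) ^ 2 * U.massSq := by
  have hp := (Dfun_pos_iff hNσ).1 hD
  have hκ : 0 < 1 - lapRatio N σ := sub_pos.2 (lapRatio_lt_one hNσ)
  have hgrad : (1 - lapRatio N σ) * U.lapSq ≤ 2 * U.gradSq := by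
    unfold H2.energy at hE
    linarith
  have hlap : 2 * U.lapSq ≤ 2 * (2 / (1 - lapRatio N σ)) * U.gradSq := by
    calc 2 * U.lapSq = 2 / (1 - lapRatio N σ) * ((1 - lapRatio N σ) * U.lapSq) := by field_simp
      _ ≤ 2 / (1 - lapRatio N σ) * (2 * U.gradSq) := by gcongr
      _ = _ := by ring
  linarith [U.lapSq_sub_mul_gradSq_add_nonneg (2 / (1 - lapRatio N σ))]

-- The choice `a² = p / m` below, with `p = ∫|u|^{2σ+2} / (σ+1)`, lets `p` cancel from the bound on
-- the nonlinear term.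
lemma exists_lt_massSq_rpow_of_energy_lt (hσ : 1 ≤ σ) (hNσ : 4 < N * σ)
    (hsub : N * σ < 4 * σ + 4) :
    ∃ c > 0, ∀ U : H2 N, 0 < Dfun σ U → 0 < U.massSq → U.energy σ < -U.massSq →
      c < U.massSq ^ σ := by
  have hκ : 0 < 1 - lapRatio N σ := sub_pos.2 (lapRatio_lt_one hNσ)
  set A := 2 / (1 - lapRatio N σ)
  have hA : 0 < A := by positivity
  obtain ⟨K, hK, hbound⟩ := exists_lintegral_rpow_le_of_shellEnergy_le hσ hNσ hsub hA
  have hC : 0 < K * 2 ^ (σ + 1) + 1 := by positivity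
  refine ⟨1 / (K * 2 ^ (σ + 1) + 1), by positivity, fun U hD hm hE ↦ ?_⟩
  obtain ⟨g, hg⟩ := IsL2Fourier.exists_left U.u_mem
  have hlap := lapSq_le_of_energy_nonpos hNσ hD (by linarith)
  have hpκ := (Dfun_pos_iff hNσ).1 hD
  set m := U.massSq
  set p := 1 / (σ + 1) * U.pPow σ with hp_def
  have hE' : U.lapSq - 2 * U.gradSq + m < p := by
    unfold H2.energy at hE
    linarith
  have hp : 0 < p := lt_of_le_of_lt
    (by simpa only [mul_one, one_pow, one_mul] using U.lapSq_sub_mul_gradSq_add_nonneg 1) hE'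
  have ha2 : √(p / m) ^ 2 = p / m := Real.sq_sqrt (by positivity)
  have haA : √(p / m) ≤ A := by
    refine Real.sqrt_le_iff.2 ⟨hA.le, (div_le_iff₀ hm).2 (le_trans ?_ hlap)⟩
    nlinarith [U.lapSq_nonneg]
  have hpPow := H2.pPow_le_of_lintegral_le (by linarith) (by positivity)
    (hbound _ _ (by positivity) haA (by positivity) g U.u hg
      (H2.shellEnergy_sqrt_div_le hg hm hp hE'.le))
  have hle : p ≤ p * (K * 2 ^ (σ + 1) * m ^ σ) := by
    calc p ≤ U.pPow σ := by
          rw [hp_def, one_div_mul_eq_div]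
          exact div_le_self (U.pPow_nonneg σ) (by linarith)
      _ ≤ _ := hpPow
      _ = p * (K * 2 ^ (σ + 1) * m ^ σ) := by
          rw [ha2, Real.mul_rpow zero_le_two hm.le, Real.rpow_add hm, Real.rpow_one]
          field_simp
  have hone : 1 ≤ K * 2 ^ (σ + 1) * m ^ σ := (le_mul_iff_one_le_right hp).1 hle
  rw [div_lt_iff₀' hC, add_one_mul]
  linarith [Real.rpow_pos_of_pos hm σ]

lemma exists_neg_massSq_le_energy (hσ : 1 ≤ σ) (hNσ : 4 < N * σ) (hsub : N * σ < 4 * σ + 4) :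
    ∃ m₀ > 0, ∀ U : H2 N, 0 < Dfun σ U → 0 < U.massSq → U.massSq ≤ m₀ →
      -U.massSq ≤ U.energy σ := by
  have hσ₀ : 0 < σ := zero_lt_one.trans_le hσ
  obtain ⟨c, hc, hbound⟩ := exists_lt_massSq_rpow_of_energy_lt hσ hNσ hsub
  refine ⟨c ^ σ⁻¹, by positivity, fun U hD hm hmc ↦ not_lt.1 fun hE ↦ ?_⟩
  exact (hbound U hD hm hE).not_ge <|
    (Real.rpow_le_rpow hm.le hmc hσ₀.le).trans_eq (Real.rpow_inv_rpow hc.le hσ₀.ne')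

end EnergyLowerBound

/-! ### Profiles concentrated near the unit shell -/

section ShellProfile

variable {E : Type*} [NormedAddCommGroup E]

lemma measureReal_abs_shellSymbol_lt_le [NormedSpace ℝ E] [FiniteDimensional ℝ E] [Nontrivial E]
    [MeasurableSpace E] [BorelSpace E] (μ : Measure E) [μ.IsAddHaarMeasure] {ε : ℝ} (hε : 0 < ε)
    (hε' : ε ≤ 1 / 2) :
    μ.real {ξ | |shellSymbol ξ| < ε} ≤ 2 * μ.toSphere.real Set.univ * ε := by
  refine ENNReal.toReal_le_of_le_ofReal (by positivity) ?_
  rw [← setLIntegral_one]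
  calc ∫⁻ _ in {ξ | |shellSymbol ξ| < ε}, 1 ∂μ
      ≤ ∫⁻ ξ in {ξ | |shellSymbol ξ| < ε},
          ENNReal.ofReal (2 * ε ^ 2) * ENNReal.ofReal (cauchyKernel ε (shellSymbol ξ)) ∂μ := by
        refine setLIntegral_mono (by fun_prop) fun ξ hξ ↦ ?_
        have hsq : shellSymbol ξ ^ 2 ≤ ε ^ 2 := sq_le_sq.2 (hξ.le.trans (le_abs_self ε))
        rw [← ENNReal.ofReal_mul (by positivity), ENNReal.one_le_ofReal, cauchyKernel,
          ← div_eq_mul_inv, one_le_div (by positivity)]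
        linarith
    _ ≤ ∫⁻ ξ in unitShell E,
          ENNReal.ofReal (2 * ε ^ 2) * ENNReal.ofReal (cauchyKernel ε (shellSymbol ξ)) ∂μ :=
        lintegral_mono_set fun _ hξ ↦ hξ.trans_le hε'
    _ ≤ ENNReal.ofReal (2 * ε ^ 2) * ENNReal.ofReal (μ.toSphere.real Set.univ / ε) := by
        rw [lintegral_const_mul' _ _ ENNReal.ofReal_ne_top]
        gcongr
        exact setLIntegral_unitShell_cauchyKernel_le μ hε
    _ = ENNReal.ofReal (2 * μ.toSphere.real Set.univ * ε) := by
        rw [← ENNReal.ofReal_mul (by positivity)]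
        congr 1
        field_simp

lemma annulus_subset_abs_shellSymbol_le {ε : ℝ} (hε : 0 ≤ ε) (hε' : ε ≤ 1) :
    Metric.ball (0 : E) ((1 + ε / 4) / (2 * π)) \ Metric.ball 0 (1 / (2 * π)) ⊆
      {ξ | |shellSymbol ξ| ≤ ε} := by
  rintro ξ ⟨hlt, hge⟩
  rw [mem_ball_zero_iff, lt_div_iff₀ (by positivity)] at hlt
  rw [mem_ball_zero_iff, not_lt, div_le_iff₀ (by positivity)] at hge
  have hsymbol : shellSymbol ξ = (‖ξ‖ * (2 * π)) ^ 2 - 1 := by unfold shellSymbol; ring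
  rw [Set.mem_ofPred_eq, hsymbol, abs_le]
  constructor <;> nlinarith

lemma exists_le_measureReal_abs_shellSymbol_le [NormedSpace ℝ E] [FiniteDimensional ℝ E]
    [Nontrivial E] [MeasurableSpace E] [BorelSpace E] (μ : Measure E) [μ.IsAddHaarMeasure] :
    ∃ c > 0, ∀ ε : ℝ, 0 ≤ ε → ε < 1 / 2 → c * ε ≤ μ.real {ξ | |shellSymbol ξ| ≤ ε} := by
  set d := Module.finrank ℝ E
  set V := μ.real (Metric.ball (0 : E) 1)
  have hV : 0 < V :=
    ENNReal.toReal_pos (Metric.measure_ball_pos μ _ one_pos).ne' measure_ball_lt_top.ne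
  have hd : (1 : ℝ) ≤ d := by exact_mod_cast Module.finrank_pos (R := ℝ) (M := E)
  have hball {r : ℝ} (hr : 0 ≤ r) : μ.real (Metric.ball (0 : E) r) = r ^ d * V := by
    rw [measureReal_def, Measure.addHaar_ball μ 0 hr, ENNReal.toReal_mul,
      ENNReal.toReal_ofReal (by positivity), ← measureReal_def]
  refine ⟨(1 / (2 * π)) ^ d * V / 4, by positivity, fun ε hε hε' ↦ ?_⟩
  have hfinite : μ {ξ : E | |shellSymbol ξ| ≤ ε} ≠ ⊤ :=
    measure_ne_top_of_subset (fun _ hξ ↦ unitShell_subset_closedBall (hξ.trans_lt hε'))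
      measure_closedBall_lt_top.ne
  calc (1 / (2 * π)) ^ d * V / 4 * ε
      = (1 + 1 * (ε / 4) - 1) * ((1 / (2 * π)) ^ d * V) := by ring
    _ ≤ (1 + d * (ε / 4) - 1) * ((1 / (2 * π)) ^ d * V) := by gcongr
    _ ≤ ((1 + ε / 4) ^ d - 1) * ((1 / (2 * π)) ^ d * V) := by
        gcongr
        exact one_add_mul_le_pow (by linarith) d
    _ = μ.real (Metric.ball 0 ((1 + ε / 4) / (2 * π)) \ Metric.ball 0 (1 / (2 * π))) := by
        rw [measureReal_sdiff (Metric.ball_subset_ball (by gcongr; linarith)) measurableSet_ball,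
          hball (by positivity), hball (by positivity), div_pow, div_pow, one_pow]
        ring
    _ ≤ _ := measureReal_mono (annulus_subset_abs_shellSymbol_le hε (by linarith)) hfinite

variable [InnerProductSpace ℝ E] [FiniteDimensional ℝ E]

lemma exists_contDiff_support_subset_shell {ε : ℝ} (hε : 0 < ε) (hε' : ε ≤ 1 / 2) :
    ∃ f : E → ℝ, ContDiff ℝ (⊤ : ℕ∞) f ∧ HasCompactSupport f ∧ (∀ ξ, 0 ≤ f ξ) ∧ (∀ ξ, f ξ ≤ 1) ∧
      (∀ ξ, f ξ ≠ 0 → |shellSymbol ξ| < ε) ∧ ∀ ξ, |shellSymbol ξ| ≤ ε / 2 → f ξ = 1 := by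
  let χ : ContDiffBump (0 : ℝ) := ⟨ε / 2, ε, by positivity, by linarith⟩
  have hsupp : ∀ ξ : E, χ (shellSymbol ξ) ≠ 0 → |shellSymbol ξ| < ε := fun ξ hξ ↦ by
    have hmem : shellSymbol ξ ∈ Function.support χ := hξ
    rwa [χ.support_eq, mem_ball_zero_iff] at hmem
  refine ⟨fun ξ ↦ χ (shellSymbol ξ), χ.contDiff.comp ?_, ?_, fun _ ↦ χ.nonneg, fun _ ↦ χ.le_one,
    hsupp, fun ξ hξ ↦ χ.one_of_mem_closedBall (mem_closedBall_zero_iff.2 hξ)⟩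
  · exact (contDiff_const.mul (contDiff_norm_sq ℝ)).sub contDiff_const
  · exact .of_support_subset_isCompact (isCompact_closedBall (0 : E) 1) fun ξ hξ ↦
      unitShell_subset_closedBall ((hsupp ξ hξ).trans_le hε')

variable (E) [MeasurableSpace E] [BorelSpace E]

lemma exists_shellProfile [Nontrivial E] : ∃ C > 0, ∃ c > 0, ∀ ε : ℝ, 0 < ε → ε ≤ 1 / 2 →
    ∃ f : E → ℝ, ContDiff ℝ (⊤ : ℕ∞) f ∧ HasCompactSupport f ∧ (∀ ξ, 0 ≤ f ξ) ∧
      (∀ ξ, f ξ ≠ 0 → |shellSymbol ξ| < ε) ∧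
      c * ε ≤ ∫ ξ, f ξ ^ 2 ∧ ∫ ξ, f ξ ^ 2 ≤ ∫ ξ, f ξ ∧ ∫ ξ, f ξ ≤ C * ε := by
  obtain ⟨c, hc, hlower⟩ := exists_le_measureReal_abs_shellSymbol_le (volume : Measure E)
  refine ⟨2 * (volume : Measure E).toSphere.real Set.univ + 1, by positivity, c / 2, by positivity,
    fun ε hε hε' ↦ ?_⟩
  obtain ⟨f, hf, hfc, hf₀, hf₁, hsupp, hone⟩ :=
    exists_contDiff_support_subset_shell (E := E) hε hε'
  have hint : Integrable f := hf.continuous.integrable_of_hasCompactSupport hfc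
  have hsq (ξ : E) : f ξ ^ 2 ≤ f ξ := by nlinarith [hf₀ ξ, hf₁ ξ]
  have hintsq : Integrable fun ξ ↦ f ξ ^ 2 := hint.mono' (by fun_prop) (ae_of_all _ fun ξ ↦ by
    rw [Real.norm_of_nonneg (by positivity)]
    exact hsq ξ)
  refine ⟨f, hf, hfc, hf₀, hsupp, ?_, integral_mono hintsq hint hsq, ?_⟩
  · calc c / 2 * ε = c * (ε / 2) := by ring
      _ ≤ volume.real {ξ : E | |shellSymbol ξ| ≤ ε / 2} :=
          hlower _ (by positivity) (by linarith)
      _ = ∫ ξ in {ξ : E | |shellSymbol ξ| ≤ ε / 2}, f ξ ^ 2 := by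
          rw [setIntegral_congr_fun (measurableSet_le (by fun_prop) (by fun_prop))
            (g := fun _ ↦ (1 : ℝ)) fun ξ hξ ↦ by simp only [hone ξ hξ, one_pow]]
          simp only [integral_const, measureReal_restrict_apply_univ, smul_eq_mul, mul_one]
      _ ≤ ∫ ξ, f ξ ^ 2 := setIntegral_le_integral hintsq (ae_of_all _ fun ξ ↦ sq_nonneg _)
  · have hfinite : volume {ξ : E | |shellSymbol ξ| < ε} ≠ ⊤ :=
      measure_ne_top_of_subset (fun _ hξ ↦ unitShell_subset_closedBall (hξ.trans_le hε'))
        measure_closedBall_lt_top.ne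
    calc ∫ ξ, f ξ = ∫ ξ in {ξ : E | |shellSymbol ξ| < ε}, f ξ :=
          (setIntegral_eq_integral_of_forall_compl_eq_zero fun ξ hξ ↦
            not_not.1 (mt (hsupp ξ) hξ)).symm
      _ ≤ ∫ _ in {ξ : E | |shellSymbol ξ| < ε}, (1 : ℝ) :=
          setIntegral_mono hint.integrableOn (integrableOn_const hfinite) hf₁
      _ = volume.real {ξ : E | |shellSymbol ξ| < ε} := by
          simp only [integral_const, measureReal_restrict_apply_univ, smul_eq_mul, mul_one]
      _ ≤ 2 * (volume : Measure E).toSphere.real Set.univ * ε :=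
          measureReal_abs_shellSymbol_lt_le volume hε hε'
      _ ≤ _ := by
          gcongr
          linarith

lemma exists_normalized_shellProfile [Nontrivial E] : ∃ C > 0, ∃ c > 0, ∀ m ε : ℝ, 0 < m → 0 < ε →
    ε ≤ 1 / 2 → ∃ f : E → ℝ, ContDiff ℝ (⊤ : ℕ∞) f ∧ HasCompactSupport f ∧ (∀ ξ, 0 ≤ f ξ) ∧
      (∀ ξ, f ξ ≠ 0 → |shellSymbol ξ| < ε) ∧ ∫ ξ, f ξ ^ 2 = m ∧
      c * (m * ε) ≤ (∫ ξ, f ξ) ^ 2 ∧ (∫ ξ, f ξ) ^ 2 ≤ C * (m * ε) := by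
  obtain ⟨C, hC, c, hc, hprofile⟩ := exists_shellProfile E
  refine ⟨C ^ 2 / c, by positivity, c, hc, fun m ε hm hε hε' ↦ ?_⟩
  obtain ⟨f, hf, hfc, hf₀, hsupp, hlower, hle, hupper⟩ := hprofile ε hε hε'
  set I := ∫ ξ, f ξ
  set J := ∫ ξ, f ξ ^ 2
  have hI : 0 ≤ I := integral_nonneg hf₀
  have hJ : 0 < J := lt_of_lt_of_le (by positivity) hlower
  have hscale : √(m / J) ^ 2 = m / J := Real.sq_sqrt (by positivity)
  refine ⟨fun ξ ↦ √(m / J) * f ξ, contDiff_const.mul hf, hfc.mul_left,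
    fun ξ ↦ mul_nonneg (Real.sqrt_nonneg _) (hf₀ ξ), fun ξ hξ ↦ hsupp ξ (right_ne_zero_of_mul hξ),
    ?_, ?_, ?_⟩
  · simp only [mul_pow, integral_const_mul, hscale]
    exact div_mul_cancel₀ m hJ.ne'
  · rw [integral_const_mul, mul_pow, hscale]
    calc c * (m * ε) = m / J * (c * ε * J) := by field_simp
      _ ≤ m / J * (I * I) := by gcongr; exact hlower.trans hle
      _ = m / J * I ^ 2 := by ring
  · rw [integral_const_mul, mul_pow, hscale]
    calc m / J * I ^ 2 ≤ m / (c * ε) * (C * ε) ^ 2 := by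
          gcongr
      _ = C ^ 2 / c * (m * ε) := by field_simp

end ShellProfile

/-! ### Schwartz functions in `H²` -/

section OfSchwartz

variable {N : ℕ}

lemma isWeakPDeriv_schwartz (f : 𝓢(Esp N, ℂ)) (i : Fin N) : IsWeakPDeriv f i (pderivC i f) := by
  intro φ hφ
  have hcoe : φ = hφ.2.toSchwartzMap hφ.1 := rfl
  rw [hcoe, pderivC_schwartz, pderivC_schwartz]
  exact SchwartzMap.integral_mul_lineDerivOp_right_eq_neg_left f _ _

lemma memLp_pderivC_schwartz (f : 𝓢(Esp N, ℂ)) (i : Fin N) : MemLp (pderivC i f) 2 := by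
  rw [pderivC_schwartz]
  exact SchwartzMap.memLp _ 2 volume

lemma memLp_pderivC_pderivC_schwartz (f : 𝓢(Esp N, ℂ)) (i : Fin N) :
    MemLp (pderivC i (pderivC i f)) 2 := by
  rw [pderivC_schwartz]
  exact memLp_pderivC_schwartz _ i

lemma isWeakLap_schwartz (f : 𝓢(Esp N, ℂ)) : IsWeakLap f (lapC f) := by
  intro φ hφ
  have hleft (i : Fin N) : Integrable fun x ↦ f x * pderivC i (pderivC i φ) x :=
    (f.memLp 2).integrable_mul ((hφ.pderivC i).pderivC i).memLp
  have hright (i : Fin N) : Integrable fun x ↦ pderivC i (pderivC i f) x * φ x :=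
    (memLp_pderivC_pderivC_schwartz f i).integrable_mul hφ.memLp
  simp only [lapC, Finset.mul_sum, Finset.sum_mul]
  rw [integral_finsetSum _ fun i _ ↦ hleft i, integral_finsetSum _ fun i _ ↦ hright i]
  refine Finset.sum_congr rfl fun i _ ↦ ?_
  rw [isWeakPDeriv_schwartz f i _ (hφ.pderivC i), pderivC_schwartz i f,
    isWeakPDeriv_schwartz _ i φ hφ, neg_neg]

/-- A Schwartz function as an element of `H²`, with its classical derivatives. -/
def H2.ofSchwartz (f : 𝓢(Esp N, ℂ)) : H2 N where
  u := f
  grad i := pderivC i f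
  lapl := lapC f
  u_mem := f.memLp 2
  grad_mem := memLp_pderivC_schwartz f
  lapl_mem := memLp_finsetSum Finset.univ fun i _ ↦ memLp_pderivC_pderivC_schwartz f i
  grad_spec := isWeakPDeriv_schwartz f
  lapl_spec := isWeakLap_schwartz f

end OfSchwartz

lemma isL2Fourier_schwartz {E : Type*} [NormedAddCommGroup E] [InnerProductSpace ℝ E]
    [FiniteDimensional ℝ E] [MeasurableSpace E] [BorelSpace E] (g : 𝓢(E, ℂ)) :
    IsL2Fourier g (𝓕 g : 𝓢(E, ℂ)) :=
  ⟨g.memLp 2, (𝓕 g : 𝓢(E, ℂ)).memLp 2, g.toLp_fourier_eq⟩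

/-! ### Test functions -/

section TestFunctions

lemma half_integral_le_norm_fourier {E : Type*} [NormedAddCommGroup E] [InnerProductSpace ℝ E]
    [FiniteDimensional ℝ E] [MeasurableSpace E] [BorelSpace E] {f : E → ℝ} (hf : Integrable f)
    (hf₀ : ∀ ξ, 0 ≤ f ξ) (hsupp : ∀ ξ, f ξ ≠ 0 → ‖ξ‖ ≤ 1) {x : E} (hx : ‖x‖ ≤ 1 / 6) :
    (∫ ξ, f ξ) / 2 ≤ ‖𝓕 (fun ξ ↦ (f ξ : ℂ)) x‖ := by
  have hint : Integrable fun ξ ↦ Real.fourierChar (-inner ℝ ξ x) • (f ξ : ℂ) :=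
    (Real.fourierIntegral_convergent_iff x).2 hf.ofReal
  have hre (ξ : E) : (Real.fourierChar (-inner ℝ ξ x) • (f ξ : ℂ)).re =
      Real.cos (2 * π * inner ℝ ξ x) * f ξ := by
    rw [Circle.smul_def, smul_eq_mul, Complex.re_mul_ofReal, Real.fourierChar_apply,
      Complex.exp_ofReal_mul_I_re, mul_neg, Real.cos_neg]
  have hcos (ξ : E) (hξ : f ξ ≠ 0) : 1 / 2 ≤ Real.cos (2 * π * inner ℝ ξ x) := by
    have hinner : |inner ℝ ξ x| ≤ 1 * (1 / 6) :=
      (abs_real_inner_le_norm ξ x).trans (by gcongr; exact hsupp ξ hξ)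
    have habs : |2 * π * inner ℝ ξ x| ≤ π / 3 := by
      rw [abs_mul, abs_of_pos (by positivity)]
      nlinarith [pi_pos]
    rw [← Real.cos_pi_div_three, ← Real.cos_abs (2 * π * inner ℝ ξ x)]
    exact Real.cos_le_cos_of_nonneg_of_le_pi (abs_nonneg _) (by linarith [pi_pos]) habs
  calc (∫ ξ, f ξ) / 2 = ∫ ξ, f ξ / 2 := (integral_div _ _).symm
    _ ≤ ∫ ξ, (Real.fourierChar (-inner ℝ ξ x) • (f ξ : ℂ)).re := by
        refine integral_mono (hf.div_const 2) hint.re fun ξ ↦ ?_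
        simp only [hre]
        rcases eq_or_ne (f ξ) 0 with h | h
        · simp [h]
        · nlinarith [hcos ξ h, hf₀ ξ]
    _ = (𝓕 (fun ξ ↦ (f ξ : ℂ)) x).re := by rw [Real.fourier_eq]; exact integral_re hint
    _ ≤ _ := Complex.re_le_norm _

variable {N : ℕ} {σ : ℝ} {U : H2 N}

lemma norm_rpow_two_mul_add_two_le {E : Type*} [SeminormedAddGroup E] (hσ : 0 ≤ σ) {b : ℝ}
    {z : E} (hz : ‖z‖ ≤ b) :
    ‖z‖ ^ (2 * σ + 2) ≤ b ^ (2 * σ) * ‖z‖ ^ 2 := by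
  rw [Real.rpow_add_of_nonneg (norm_nonneg _) (by linarith) zero_le_two, Real.rpow_two]
  gcongr

namespace H2

lemma pPow_le_of_norm_le (hσ : 0 ≤ σ) {b : ℝ} (hb : ∀ x, ‖U.u x‖ ≤ b) :
    U.pPow σ ≤ b ^ (2 * σ) * U.massSq := by
  rw [massSq, ← integral_const_mul]
  exact integral_mono_of_nonneg (ae_of_all _ fun x ↦ by positivity)
    ((U.u_mem.integrable_norm_pow two_ne_zero).const_mul _)
    (ae_of_all _ fun x ↦ norm_rpow_two_mul_add_two_le hσ (hb x))

lemma integrable_norm_rpow_of_norm_le (hσ : 0 ≤ σ) {b : ℝ} (hb : ∀ x, ‖U.u x‖ ≤ b) :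
    Integrable fun x ↦ ‖U.u x‖ ^ (2 * σ + 2) := by
  refine ((U.u_mem.integrable_norm_pow two_ne_zero).const_mul (b ^ (2 * σ))).mono'
    (U.u_mem.aestronglyMeasurable.norm.aemeasurable.pow_const _).aestronglyMeasurable
    (ae_of_all _ fun x ↦ ?_)
  rw [Real.norm_of_nonneg (by positivity)]
  exact norm_rpow_two_mul_add_two_le hσ (hb x)

lemma le_pPow_of_le_norm {a : ℝ} (ha : 0 ≤ a) (hσ : 0 ≤ σ) {s : Set (Esp N)}
    (hs : MeasurableSet s) (hs' : volume s ≠ ⊤)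
    (hint : Integrable fun x ↦ ‖U.u x‖ ^ (2 * σ + 2)) (h : ∀ x ∈ s, a ≤ ‖U.u x‖) :
    volume.real s * a ^ (2 * σ + 2) ≤ U.pPow σ := by
  calc volume.real s * a ^ (2 * σ + 2) = ∫ _ in s, a ^ (2 * σ + 2) := by
        rw [setIntegral_const, smul_eq_mul]
    _ ≤ ∫ x in s, ‖U.u x‖ ^ (2 * σ + 2) := by
        refine setIntegral_mono_on (integrableOn_const hs') hint.integrableOn hs fun x hx ↦ ?_
        gcongr
        exact h x hx
    _ ≤ U.pPow σ := setIntegral_le_integral hint (ae_of_all _ fun x ↦ by positivity)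

lemma lapSq_sub_gradSq_add_le {g : Esp N → ℂ} (hg : IsL2Fourier g U.u) {ε : ℝ}
    (hsupp : ∀ ξ, g ξ ≠ 0 → |shellSymbol ξ| < ε) :
    U.lapSq - 2 * U.gradSq + U.massSq ≤ ε ^ 2 * U.massSq := by
  obtain ⟨hint, hquad⟩ := integral_eq_lapSq_sub_add hg 1
  simp only [mul_one, one_pow, one_mul] at hquad
  rw [← hquad, massSq_eq_integral hg, ← integral_const_mul]
  refine integral_mono hint ((hg.memLp_left.integrable_norm_pow two_ne_zero).const_mul _) fun ξ ↦ ?_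
  rcases eq_or_ne (g ξ) 0 with h | h
  · simp [h]
  · refine mul_le_mul_of_nonneg_right ?_ (by positivity)
    exact sq_le_sq.2 ((hsupp ξ h).le.trans (le_abs_self ε))

end H2

lemma exists_H2_of_shellProfile {f : Esp N → ℝ} {ε : ℝ} (hε : ε ≤ 1 / 2)
    (hf : ContDiff ℝ (⊤ : ℕ∞) f) (hfc : HasCompactSupport f) (hf₀ : ∀ ξ, 0 ≤ f ξ)
    (hsupp : ∀ ξ, f ξ ≠ 0 → |shellSymbol ξ| < ε) :
    ∃ U : H2 N, U.massSq = ∫ ξ, f ξ ^ 2 ∧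
      U.lapSq - 2 * U.gradSq + U.massSq ≤ ε ^ 2 * U.massSq ∧ (∀ x, ‖U.u x‖ ≤ ∫ ξ, f ξ) ∧
      ∀ x, ‖x‖ ≤ 1 / 6 → (∫ ξ, f ξ) / 2 ≤ ‖U.u x‖ := by
  have hc : HasCompactSupport fun ξ ↦ (f ξ : ℂ) :=
    hfc.comp_left (g := fun r : ℝ ↦ (r : ℂ)) Complex.ofReal_zero
  let g : 𝓢(Esp N, ℂ) := hc.toSchwartzMap (Complex.ofRealCLM.contDiff.comp hf)
  have hg : IsL2Fourier g (H2.ofSchwartz (𝓕 g)).u := isL2Fourier_schwartz g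
  have hval (ξ : Esp N) : g ξ = f ξ := rfl
  have hnorm (ξ : Esp N) : ‖g ξ‖ = f ξ := by
    rw [hval, Complex.norm_real, Real.norm_of_nonneg (hf₀ ξ)]
  have hu (x : Esp N) : (H2.ofSchwartz (𝓕 g)).u x = 𝓕 (fun ξ ↦ (f ξ : ℂ)) x :=
    congrFun (SchwartzMap.fourier_coe g) x
  refine ⟨.ofSchwartz (𝓕 g), ?_, H2.lapSq_sub_gradSq_add_le hg fun ξ hξ ↦ hsupp ξ ?_, fun x ↦ ?_,
    fun x hx ↦ ?_⟩
  · simp only [H2.massSq_eq_integral hg, hnorm]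
  · exact Complex.ofReal_ne_zero.1 hξ
  · rw [hu]
    refine (VectorFourier.norm_fourierIntegral_le_integral_norm _ _ _ _ _).trans_eq ?_
    simp only [Complex.norm_real, Real.norm_of_nonneg (hf₀ _)]
  · rw [hu]
    refine half_integral_le_norm_fourier (hf.continuous.integrable_of_hasCompactSupport hfc) hf₀
      (fun ξ hξ ↦ mem_closedBall_zero_iff.1 ?_) hx
    exact unitShell_subset_closedBall ((hsupp ξ hξ).trans_le hε)

lemma exists_testFunction (hN : N ≠ 0) (hσ : 0 < σ) : ∃ C : ℝ, ∃ c > 0, ∀ m ε : ℝ, 0 < m → 0 < ε →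
    ε ≤ 1 / 2 → ∃ U : H2 N, U.massSq = m ∧ U.lapSq - 2 * U.gradSq + m ≤ ε ^ 2 * m ∧
      c * (m * ε) ^ (σ + 1) ≤ U.pPow σ ∧ U.pPow σ ≤ C * (m * ε) ^ σ * m := by
  have : NeZero N := ⟨hN⟩
  obtain ⟨C, hC, c, hc, hprofile⟩ := exists_normalized_shellProfile (Esp N)
  have hV : 0 < volume.real (closedBall (0 : Esp N) (1 / 6)) := ENNReal.toReal_pos
    (Metric.measure_closedBall_pos _ _ (by norm_num)).ne' measure_closedBall_lt_top.ne
  refine ⟨C ^ σ, volume.real (closedBall (0 : Esp N) (1 / 6)) * (c / 4) ^ (σ + 1),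
    by positivity, fun m ε hm hε hε' ↦ ?_⟩
  obtain ⟨f, hf, hfc, hf₀, hsupp, hmass, hlower, hupper⟩ := hprofile m ε hm hε hε'
  obtain ⟨U, hU, hquad, hle, hge⟩ := exists_H2_of_shellProfile hε' hf hfc hf₀ hsupp
  have hI : 0 ≤ ∫ ξ, f ξ := integral_nonneg hf₀
  rw [hU, hmass] at hquad
  refine ⟨U, hU.trans hmass, hquad, ?_, ?_⟩
  · calc volume.real (closedBall (0 : Esp N) (1 / 6)) * (c / 4) ^ (σ + 1) * (m * ε) ^ (σ + 1)
        = volume.real (closedBall (0 : Esp N) (1 / 6)) * (c * (m * ε) / 4) ^ (σ + 1) := by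
          rw [mul_assoc, ← Real.mul_rpow (by positivity) (by positivity), div_mul_eq_mul_div]
      _ ≤ volume.real (closedBall (0 : Esp N) (1 / 6)) * (((∫ ξ, f ξ) / 2) ^ 2) ^ (σ + 1) := by
          gcongr
          linarith
      _ = volume.real (closedBall (0 : Esp N) (1 / 6)) * ((∫ ξ, f ξ) / 2) ^ (2 * σ + 2) := by
          rw [← Real.rpow_two, ← Real.rpow_mul (by positivity), mul_add_one]
      _ ≤ U.pPow σ := H2.le_pPow_of_le_norm (by positivity) hσ.le measurableSet_closedBall
          measure_closedBall_lt_top.ne (H2.integrable_norm_rpow_of_norm_le hσ.le hle)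
          fun x hx ↦ hge x (mem_closedBall_zero_iff.1 hx)
  · calc U.pPow σ ≤ (∫ ξ, f ξ) ^ (2 * σ) * U.massSq := H2.pPow_le_of_norm_le hσ.le hle
      _ = ((∫ ξ, f ξ) ^ 2) ^ σ * m := by
          rw [hU, hmass, Real.rpow_mul hI, Real.rpow_two]
      _ ≤ (C * (m * ε)) ^ σ * m := by gcongr
      _ = C ^ σ * (m * ε) ^ σ * m := by rw [Real.mul_rpow hC.le (by positivity)]

end TestFunctions

/-! ### Membership in `O` -/

section MemO

variable {N : ℕ} {σ : ℝ} {U : H2 N}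

lemma H2.nontriv_of_pPow_pos (hσ : 0 < σ) (hp : 0 < U.pPow σ) : U.Nontriv := by
  refine fun hzero ↦ hp.ne' (integral_eq_zero_of_ae (hzero.mono fun x hx ↦ ?_))
  simp only [hx, Pi.zero_apply, norm_zero]
  exact Real.zero_rpow (by positivity)

lemma tInfl_eq : tInfl σ U =
    (lapRatio N σ * U.lapSq / (1 / (σ + 1) * U.pPow σ)) ^ (2 / (N * σ - 4)) := by
  unfold tInfl lapRatio
  simp only [div_eq_mul_inv, mul_inv, inv_inv, one_mul]
  ring_nf

lemma lt_tInfl (hNσ : 4 < N * σ) (hσ : 0 < σ) (hp : 0 < U.pPow σ) {T : ℝ} (hT : 0 < T)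
    (h : T ^ ((N * σ - 4) / 2) * (1 / (σ + 1) * U.pPow σ) < lapRatio N σ * U.lapSq) :
    T < tInfl σ U := by
  have hn : 0 < N * σ - 4 := sub_pos.2 hNσ
  calc T = (T ^ ((N * σ - 4) / 2)) ^ (2 / (N * σ - 4)) := by
        rw [← Real.rpow_mul hT.le, div_mul_div_cancel₀ two_ne_zero, div_self hn.ne', Real.rpow_one]
    _ < (lapRatio N σ * U.lapSq / (1 / (σ + 1) * U.pPow σ)) ^ (2 / (N * σ - 4)) := by
        refine Real.rpow_lt_rpow (by positivity) ?_ (by positivity)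
        rwa [lt_div_iff₀ (by positivity)]
    _ = tInfl σ U := tInfl_eq.symm

lemma rpow_tInfl_mul_pPow (hNσ : 4 < N * σ) (hσ : 0 < σ) (hp : 0 < U.pPow σ)
    (ht : 0 < tInfl σ U) :
    tInfl σ U ^ (N * σ / 2 - 1) * (1 / (σ + 1) * U.pPow σ) =
      tInfl σ U * (lapRatio N σ * U.lapSq) := by
  have hn : 0 < N * σ - 4 := sub_pos.2 hNσ
  have hratio : 0 ≤ lapRatio N σ * U.lapSq / (1 / (σ + 1) * U.pPow σ) :=
    div_nonneg (mul_nonneg (lapRatio_pos hNσ).le U.lapSq_nonneg) (by positivity)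
  have hpow : tInfl σ U ^ ((N * σ - 4) / 2) =
      lapRatio N σ * U.lapSq / (1 / (σ + 1) * U.pPow σ) := by
    rw [tInfl_eq, ← Real.rpow_mul hratio, div_mul_div_cancel₀ hn.ne', div_self two_ne_zero,
      Real.rpow_one]
  have hexp : N * σ / 2 - 1 = 1 + (N * σ - 4) / 2 := by ring
  rw [hexp, Real.rpow_add ht, Real.rpow_one, hpow, mul_assoc, div_mul_cancel₀ _ (by positivity)]

lemma hasDerivAt_phiFun {t : ℝ} (ht : t ≠ 0) :
    HasDerivAt (phiFun σ U) (2 * t * U.lapSq - 2 * U.gradSq -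
      N * σ / 2 * (t ^ (N * σ / 2 - 1) * (1 / (σ + 1) * U.pPow σ))) t := by
  have hlap : HasDerivAt (fun s : ℝ ↦ s ^ 2 * U.lapSq) (2 * t * U.lapSq) t := by
    simpa using (hasDerivAt_pow 2 t).mul_const U.lapSq
  have hgrad : HasDerivAt (fun s : ℝ ↦ 2 * s * U.gradSq) (2 * U.gradSq) t := by
    simpa using ((hasDerivAt_id t).const_mul 2).mul_const U.gradSq
  have hpow := ((Real.hasDerivAt_rpow_const (p := N * σ / 2) (.inl ht)).div_const (σ + 1)).mul_const
    (U.pPow σ)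
  refine ((hlap.fun_sub hgrad).fun_sub hpow).congr_deriv ?_
  ring

lemma deriv_phiFun_tInfl (hNσ : 4 < N * σ) (hσ : 0 < σ) (hp : 0 < U.pPow σ)
    (ht : 0 < tInfl σ U) :
    deriv (phiFun σ U) (tInfl σ U) =
      2 * ((N * σ - 4) / (N * σ - 2) * tInfl σ U * U.lapSq - U.gradSq) := by
  have hn : N * σ - 2 ≠ 0 := by linarith
  have hratio : N * σ / 2 * lapRatio N σ = 4 / (N * σ - 2) := by
    have hn₀ : N * σ ≠ 0 := by linarith
    rw [lapRatio, div_mul_div_comm, mul_left_comm 2, mul_div_mul_left _ _ hn₀]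
    field_simp
    norm_num
  calc deriv (phiFun σ U) (tInfl σ U)
      = 2 * tInfl σ U * U.lapSq - 2 * U.gradSq -
          N * σ / 2 * lapRatio N σ * (tInfl σ U * U.lapSq) := by
        rw [(hasDerivAt_phiFun ht.ne').deriv, rpow_tInfl_mul_pPow hNσ hσ hp ht]
        ring
    _ = _ := by
        rw [hratio]
        field_simp
        ring

lemma exists_forall_memO (hNσ : 4 < N * σ) (hσ : 0 < σ) (C : ℝ) :
    ∃ δ > 0, ∀ U : H2 N, U.gradSq ≤ C * U.lapSq → 0 < U.pPow σ → U.pPow σ < δ * U.lapSq →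
      memO σ U := by
  have hn₄ : 0 < N * σ - 4 := sub_pos.2 hNσ
  have hn₂ : 0 < N * σ - 2 := by linarith
  set T := max 1 (C * (N * σ - 2) / (N * σ - 4))
  have hT : 0 < T := zero_lt_one.trans_le (le_max_left _ _)
  have hTpow : 1 ≤ T ^ ((N * σ - 4) / 2) := Real.one_le_rpow (le_max_left _ _) (by positivity)
  have hκ := lapRatio_pos hNσ
  refine ⟨(σ + 1) * lapRatio N σ / T ^ ((N * σ - 4) / 2), by positivity,
    fun U hgrad hp hlt ↦ ?_⟩
  have hlap : 0 < U.lapSq := pos_of_mul_pos_right (hp.trans hlt) (by positivity)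
  have hsmall : T ^ ((N * σ - 4) / 2) * (1 / (σ + 1) * U.pPow σ) < lapRatio N σ * U.lapSq := by
    rw [div_mul_eq_mul_div, lt_div_iff₀ (by positivity)] at hlt
    rw [one_div_mul_eq_div, mul_div_assoc', div_lt_iff₀ (by positivity)]
    linarith
  have hD : 0 < Dfun σ U :=
    (Dfun_pos_iff hNσ).2 ((le_mul_of_one_le_left (by positivity) hTpow).trans_lt hsmall)
  have ht : T < tInfl σ U := lt_tInfl hNσ hσ hp hT hsmall
  refine ⟨H2.nontriv_of_pPow_pos hσ hp, hD, ?_⟩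
  rw [deriv_phiFun_tInfl hNσ hσ hp (hT.trans ht)]
  have hCt : C < (N * σ - 4) / (N * σ - 2) * tInfl σ U := by
    rw [div_mul_eq_mul_div, lt_div_iff₀ hn₂, ← div_lt_iff₀' hn₄]
    exact (le_max_right _ _).trans_lt ht
  have := mul_lt_mul_of_pos_right hCt hlap
  linarith

lemma H2.gradSq_le_and_massSq_le (h : U.lapSq - 2 * U.gradSq + U.massSq ≤ U.massSq / 4) :
    U.gradSq ≤ 3 * U.lapSq ∧ U.massSq ≤ 8 * U.lapSq := by
  have hquad := U.lapSq_sub_mul_gradSq_add_nonneg (3 / 8)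
  have hlap := U.lapSq_nonneg
  constructor <;> linarith

lemma exists_eventually_memO_energy_le (hNσ : 4 < N * σ) {m : ℝ} (hm : 0 < m) :
    ∃ c > 0, ∀ᶠ ε in 𝓝[>] (0 : ℝ), ∃ U : H2 N, memO σ U ∧ U.massSq = m ∧
      U.energy σ ≤ -m + ε ^ 2 * m - c * ε ^ (σ + 1) := by
  have hN : N ≠ 0 := by rintro rfl; norm_num at hNσ
  have hσ : 0 < σ := pos_of_mul_pos_right (by linarith) N.cast_nonneg
  obtain ⟨C, c, hc, htest⟩ := exists_testFunction hN hσ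
  obtain ⟨δ, hδ, hmemO⟩ := exists_forall_memO hNσ hσ 3
  have hsmall : ∀ᶠ ε in 𝓝[>] (0 : ℝ), C * (m * ε) ^ σ * m < δ * (m / 8) := by
    have hcont : Continuous fun ε : ℝ ↦ C * (m * ε) ^ σ * m :=
      (((continuous_const_mul m).rpow_const fun _ ↦ .inr hσ.le).const_mul C).mul_const m
    refine nhdsWithin_le_nhds (hcont.continuousAt.eventually_lt_const ?_)
    simp only [mul_zero, Real.zero_rpow hσ.ne', zero_mul]
    positivity
  refine ⟨1 / (σ + 1) * (c * m ^ (σ + 1)), by positivity, ?_⟩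
  filter_upwards [hsmall, Ioo_mem_nhdsGT (show (0 : ℝ) < 1 / 2 by norm_num)]
    with ε hε ⟨hpos, hhalf⟩
  obtain ⟨U, hmass, hquad, hlower, hupper⟩ := htest m ε hm hpos hhalf.le
  have hεm : ε ^ 2 * m ≤ m / 4 := by
    calc ε ^ 2 * m ≤ (1 / 2) ^ 2 * m := by gcongr
      _ = m / 4 := by ring
  obtain ⟨hgrad, hlap⟩ := H2.gradSq_le_and_massSq_le (hmass ▸ hquad.trans hεm)
  rw [hmass] at hlap
  refine ⟨U, hmemO U hgrad (lt_of_lt_of_le (by positivity) hlower) ?_, hmass, ?_⟩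
  · calc U.pPow σ < δ * (m / 8) := hupper.trans_lt hε
      _ ≤ δ * U.lapSq := by gcongr; linarith
  · have hgain : 1 / (σ + 1) * (c * m ^ (σ + 1)) * ε ^ (σ + 1) ≤ 1 / (σ + 1) * U.pPow σ := by
      rw [mul_assoc, mul_assoc c, ← Real.mul_rpow hm.le hpos.le]
      gcongr
    unfold H2.energy
    linarith

end MemO

/-! ### The constrained minimum -/

section TildeE

variable {N : ℕ} {σ m : ℝ}

lemma tildeE_le_energy (hNσ : 4 < N * σ) {U : H2 N} (hU : memO σ U) :
    tildeE N σ U.massSq ≤ U.energy σ := by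
  refine csInf_le ⟨-(U.massSq / (1 - lapRatio N σ)), ?_⟩ ⟨U, hU, rfl, rfl⟩
  rintro _ ⟨V, hV, hmass, rfl⟩
  rw [← hmass]
  exact neg_massSq_div_le_energy hNσ hV.2.1

lemma exists_eventually_tildeE_le (hNσ : 4 < N * σ) (hm : 0 < m) :
    ∃ c > 0, ∀ᶠ ε in 𝓝[>] (0 : ℝ), tildeE N σ m ≤ -m + ε ^ 2 * m - c * ε ^ (σ + 1) := by
  obtain ⟨c, hc, htest⟩ := exists_eventually_memO_energy_le hNσ hm
  refine ⟨c, hc, htest.mono ?_⟩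
  rintro ε ⟨U, hU, rfl, hE⟩
  exact (tildeE_le_energy hNσ hU).trans hE

lemma tildeE_lt_neg (hNσ : 4 < N * σ) (hσ : σ < 1) (hm : 0 < m) : tildeE N σ m < -m := by
  obtain ⟨c, hc, hle⟩ := exists_eventually_tildeE_le hNσ hm
  have hsmall : ∀ᶠ ε in 𝓝[>] (0 : ℝ), ε ^ (1 - σ) * m < c := by
    have hcont : Continuous fun ε : ℝ ↦ ε ^ (1 - σ) * m :=
      (Real.continuous_rpow_const (sub_nonneg.2 hσ.le)).mul_const m
    refine nhdsWithin_le_nhds (hcont.continuousAt.eventually_lt_const ?_)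
    simpa only [Real.zero_rpow (sub_pos.2 hσ).ne', zero_mul] using hc
  obtain ⟨ε, hε, hεc, hpos : 0 < ε⟩ := (hle.and (hsmall.and self_mem_nhdsWithin)).exists
  have hgain : ε ^ 2 * m < c * ε ^ (σ + 1) := by
    calc ε ^ 2 * m = ε ^ (1 - σ) * m * ε ^ (σ + 1) := by
          rw [mul_right_comm, ← Real.rpow_add hpos, ← Real.rpow_two]
          ring_nf
      _ < c * ε ^ (σ + 1) := by gcongr
  linarith

lemma tildeE_le_neg (hNσ : 4 < N * σ) (hm : 0 < m) : tildeE N σ m ≤ -m := by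
  obtain ⟨c, hc, hle⟩ := exists_eventually_tildeE_le hNσ hm
  have hlim : Tendsto (fun ε : ℝ ↦ -m + ε ^ 2 * m) (𝓝[>] 0) (𝓝 (-m)) := by
    have hcont : Continuous fun ε : ℝ ↦ -m + ε ^ 2 * m := by fun_prop
    simpa using (hcont.tendsto 0).mono_left nhdsWithin_le_nhds
  refine ge_of_tendsto hlim ?_
  filter_upwards [hle, self_mem_nhdsWithin] with ε hε (hpos : 0 < ε)
  exact hε.trans (sub_le_self _ (by positivity))

lemma exists_neg_le_tildeE (hσ : 1 ≤ σ) (hNσ : 4 < N * σ) (hsub : N * σ < 4 * σ + 4) :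
    ∃ m₀ > 0, ∀ m, 0 < m → m ≤ m₀ → -m ≤ tildeE N σ m := by
  obtain ⟨m₀, hm₀, hbound⟩ := exists_neg_massSq_le_energy hσ hNσ hsub
  refine ⟨m₀, hm₀, fun m hm hle ↦ ?_⟩
  obtain ⟨_, _, htest⟩ := exists_eventually_memO_energy_le hNσ hm
  obtain ⟨_, U, hU, hmass, _⟩ := htest.exists
  refine le_csInf ⟨_, U, hU, hmass, rfl⟩ ?_
  rintro _ ⟨V, hV, rfl, rfl⟩
  exact hbound V hV.2.1 hm hle

lemma mul_lt_of_subcritical (hσ : 0 < σ) (hsub : N ≤ 4 ∨ (5 ≤ N ∧ σ < 4 / ((N : ℝ) - 4))) :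
    N * σ < 4 * σ + 4 := by
  rcases hsub with hN | ⟨hN, hσN⟩
  · have hN : (N : ℝ) ≤ 4 := by exact_mod_cast hN
    nlinarith
  · have hN : (5 : ℝ) ≤ N := by exact_mod_cast hN
    rw [lt_div_iff₀ (by linarith)] at hσN
    linarith

end TildeE

/- For `N ≥ 5` and `σ > 4 / (N - 4)` some `u ∈ H²` are not in `L^{2σ+2}`, and `pPow` is `0` there;
the competitors behind the first part are bounded functions, which do not exploit this. -/
theorem stmt18_general (N : ℕ) (σ : ℝ) (hN : 1 ≤ N) (hσ4 : 4 / (N : ℝ) < σ) :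
    (σ < 1 → ∀ m : ℝ, 0 < m → tildeE N σ m < -m) ∧
    (1 ≤ σ → (N ≤ 4 ∨ (5 ≤ N ∧ σ < 4 / ((N : ℝ) - 4))) →
      ∃ m₀ : ℝ, 0 < m₀ ∧ ∀ m : ℝ, 0 < m → m ≤ m₀ → tildeE N σ m = -m) := by
  have hN₀ : (0 : ℝ) < N := by exact_mod_cast hN
  have hNσ : 4 < N * σ := (div_lt_iff₀' hN₀).1 hσ4
  refine ⟨fun hσ m hm ↦ tildeE_lt_neg hNσ hσ hm, fun hσ hsub ↦ ?_⟩
  obtain ⟨m₀, hm₀, hlower⟩ :=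
    exists_neg_le_tildeE hσ hNσ (mul_lt_of_subcritical (by linarith) hsub)
  exact ⟨m₀, hm₀, fun m hm hle ↦ (tildeE_le_neg hNσ hm).antisymm (hlower m hm hle)⟩

/-- (i) If `N ≥ 5` and `4/N < σ < 1` then `Ẽ_min(m) < -m` for every
`m > 0`. (ii) If `σ > 4/N` and `σ ≥ 1` then there is `m₀ > 0` with `Ẽ_min(m) = -m` for all
`m ∈ (0, m₀]`. -/
theorem stmt18 (N : ℕ) (σ : ℝ) (hN : 1 ≤ N) (hσ4 : 4 / (N : ℝ) < σ)
    (hsub : N ≤ 4 ∨ (5 ≤ N ∧ σ < 4 / ((N : ℝ) - 4))) :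
    ((5 ≤ N ∧ σ < 1) → ∀ m : ℝ, 0 < m → tildeE N σ m < -m) ∧
    (1 ≤ σ → ∃ m₀ : ℝ, 0 < m₀ ∧ ∀ m : ℝ, 0 < m → m ≤ m₀ → tildeE N σ m = -m) := by
  have hgen := stmt18_general N σ hN hσ4
  exact ⟨fun h ↦ hgen.1 h.2, fun hσ ↦ hgen.2 hσ hsub⟩

end
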